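/- arXiv:0706.4101 — 3 statements merged into one kernel-verified Lean document; each statement's English description precedes it below -/
import Mathlib

section
/- Every K4-free graph G on n vertices can be made bipartite by deleting at most n^2/9 edges; that is, e(G) - b(G) ≤ n^2/9. -/
open Finset

namespace SimpleGraph

variable {V : Type*} [Fintype V] [DecidableEq V] (G : SimpleGraph V) [DecidableRel G.Adj]

/-- The number of edges of `G` crossing the cut `(S, Sᶜ)`. -/
def cutSize (S : Finset V) : ℕ :=
  ((S ×ˢ Sᶜ).filter fun p => G.Adj p.1 p.2).card

/-- `b(G)`: the maximum number of edges in a bipartite subgraph of `G`,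
equivalently the maximum over vertex subsets `S` of the number of edges
between `S` and its complement. -/
def maxCut : ℕ := Finset.univ.sup fun S : Finset V => G.cutSize S

/-- The number of edges of `G` with both endpoints in `S`. -/
def spanEdges (S : Finset V) : ℕ :=
  (G.edgeFinset.filter fun e => e ∈ S.sym2).card

end SimpleGraph

/-!
Suppose the quadratic form of the adjacency matrix, averaged over pairs of vertices, is at least `ℓ`
on all `±1` vectors, that is, on all cuts. The diagonal vanishes, so the form is affine in each
coordinate and the bound persists on the whole cube `[-1, 1]^V`. Let `m` be the average of the
degree densities `d v`, and `T v` the density of triangles at `v`. It suffices that `ℓ + m ≤ 4/9`,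
which three families of test vectors give:

* the cuts along neighbourhoods, averaged over all vertices, bound `ℓ` by `m` and the averages of
  `T` and `d ^ 2`;
* `K₄`-freeness makes the common neighbourhood of an edge `v u` independent; the vectors that are
  `1` there, `-1` on the rest of the neighbourhood of `v` and `0` elsewhere, averaged over `u`,
  give `ℓ ≤ d v ^ 2 - 3 * T v`;
* in a triangle, each pairwise common neighbourhood is independent and no two of them meet, and
  Turán's theorem controls the remaining vertices. The three cuts separating two of these
  neighbourhoods from the rest then bound the degree sum of the triangle from above.

If `ℓ + m > 4/9`, the last two bounds and a tangent-line estimate for a cubic polynomial in `d v`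
contradict the first.
-/

open scoped BigOperators

namespace MaxCut

section Cube

variable {ι : Type*} [Finite ι] [DecidableEq ι]

lemma exists_vertex_le_of_concaveOn_update {f : (ι → ℝ) → ℝ} {a b : ι → ℝ}
    (hf : ∀ s i, ConcaveOn ℝ (Set.Icc (a i) (b i)) fun t => f (Function.update s i t))
    {s : ι → ℝ} (hs : s ∈ Set.Icc a b) :
    ∃ σ : ι → ℝ, (∀ i, σ i = a i ∨ σ i = b i) ∧ f σ ≤ f s := by
  have := Fintype.ofFinite ι
  suffices h : ∀ W : Finset ι, ∃ σ ∈ Set.Icc a b, (∀ i ∈ W, σ i = a i ∨ σ i = b i) ∧ f σ ≤ f s by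
    obtain ⟨σ, -, hσ, hle⟩ := h univ
    exact ⟨σ, fun i => hσ i (mem_univ i), hle⟩
  intro W
  induction W using Finset.induction_on with
  | empty => exact ⟨s, hs, by simp, le_rfl⟩
  | insert z W _ ih =>
    obtain ⟨σ, hσ, hvertex, hle⟩ := ih
    have hz : a z ≤ b z := (hσ.1 z).trans (hσ.2 z)
    have of_endpoint : ∀ t, (t = a z ∨ t = b z) → f (Function.update σ z t) ≤ f σ →
        ∃ σ ∈ Set.Icc a b, (∀ i ∈ insert z W, σ i = a i ∨ σ i = b i) ∧ f σ ≤ f s := by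
      intro t ht hft
      refine ⟨Function.update σ z t, ⟨?_, ?_⟩, fun i hi => ?_, hft.trans hle⟩
      · exact le_update_iff.2 ⟨by rcases ht with rfl | rfl <;> simp [hz], fun i _ => hσ.1 i⟩
      · exact update_le_iff.2 ⟨by rcases ht with rfl | rfl <;> simp [hz], fun i _ => hσ.2 i⟩
      · rcases eq_or_ne i z with rfl | hne
        · simpa using ht
        · simpa [hne] using hvertex i ((mem_insert.1 hi).resolve_left hne)
    have hmin := (hf σ z).min_le_of_mem_Icc (Set.left_mem_Icc.2 hz) (Set.right_mem_Icc.2 hz)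
      ⟨hσ.1 z, hσ.2 z⟩
    rw [Function.update_eq_self] at hmin
    rcases min_le_iff.1 hmin with h | h
    · exact of_endpoint _ (.inl rfl) h
    · exact of_endpoint _ (.inr rfl) h

end Cube

section QuadForm

variable {V : Type*} [Fintype V]

/-- The quadratic form of the matrix `M`, averaged over all pairs of indices rather than summed:
on adjacency matrices this normalisation turns edge counts into densities. -/
noncomputable def quadForm (M : Matrix V V ℝ) (s : V → ℝ) : ℝ :=
  𝔼 x, 𝔼 y, M x y * (s x * s y)

lemma quadForm_eq_sum_div (M : Matrix V V ℝ) (s : V → ℝ) :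
    quadForm M s = (∑ x, ∑ y, M x y * (s x * s y)) / (Fintype.card V : ℝ) ^ 2 := by
  simp_rw [quadForm, Fintype.expect_eq_sum_div_card, ← Finset.sum_div]
  rw [div_div, sq]

lemma concaveOn_quadForm_update [DecidableEq V] {M : Matrix V V ℝ} {z : V} (hM : M z z ≤ 0)
    (s : V → ℝ) : ConcaveOn ℝ Set.univ fun t => quadForm M (Function.update s z t) := by
  refine ⟨convex_univ, fun p _ q _ a b ha hb hab => ?_⟩
  simp only [quadForm, smul_eq_mul, mul_expect, ← expect_add_distrib]
  refine expect_le_expect fun x _ => expect_le_expect fun y _ => ?_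
  obtain rfl : a = 1 - b := eq_sub_of_add_eq hab
  by_cases hx : x = z <;> by_cases hy : y = z
  · simp only [hx, hy, Function.update_self]
    have hgap : 0 ≤ -M z z * ((1 - b) * b * (p - q) ^ 2) := by
      have := neg_nonneg.2 hM
      positivity
    linarith
  all_goals
    simp only [hx, hy, Function.update_self, ne_eq, not_false_eq_true, Function.update_of_ne]
    exact le_of_eq (by ring)

lemma exists_sign_quadForm_le {M : Matrix V V ℝ} (hM : ∀ x, M x x ≤ 0) {s : V → ℝ}
    (hs : s ∈ Set.Icc (-1) 1) :
    ∃ σ : V → ℝ, (∀ x, σ x = -1 ∨ σ x = 1) ∧ quadForm M σ ≤ quadForm M s := by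
  classical
  exact exists_vertex_le_of_concaveOn_update
    (fun s z => (concaveOn_quadForm_update (hM z) s).subset (Set.subset_univ _) (convex_Icc _ _)) hs

lemma quadForm_three_cuts (M : Matrix V V ℝ) (α β γ : V → ℝ) :
    quadForm M (1 - 2 * (β + γ)) + quadForm M (1 - 2 * (α + γ)) + quadForm M (1 - 2 * (α + β)) =
      4 * quadForm M (1 - α - β - γ) - quadForm M 1
        + 4 * (quadForm M α + quadForm M β + quadForm M γ) := by
  simp only [quadForm, mul_expect, ← expect_add_distrib, ← expect_sub_distrib]
  refine expect_congr rfl fun x _ => expect_congr rfl fun y _ => ?_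
  simp only [Pi.sub_apply, Pi.add_apply, Pi.mul_apply, Pi.ofNat_apply]
  ring

lemma quadForm_two_mul_sub {M : Matrix V V ℝ} (hM : M.IsSymm) (f g : V → ℝ) :
    quadForm M (2 * g - f) =
      4 * quadForm M g - 4 * (𝔼 x, g x * 𝔼 y, M x y * f y) + quadForm M f := by
  have hswap : 𝔼 x, f x * 𝔼 y, M x y * g y = 𝔼 x, g x * 𝔼 y, M x y * f y := by
    simp_rw [mul_expect]
    rw [expect_comm]
    exact expect_congr rfl fun x _ => expect_congr rfl fun y _ => by rw [hM.apply]; ring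
  calc quadForm M (2 * g - f)
      = 𝔼 x, 𝔼 y, (4 * (M x y * (g x * g y)) - 2 * (g x * (M x y * f y))
          - 2 * (f x * (M x y * g y)) + M x y * (f x * f y)) := by
        refine expect_congr rfl fun x _ => expect_congr rfl fun y _ => ?_
        simp only [Pi.sub_apply, Pi.mul_apply, Pi.ofNat_apply]
        ring
    _ = _ := by
        simp_rw [expect_add_distrib, expect_sub_distrib, ← mul_expect, hswap, quadForm]
        ring

end QuadForm

section Numeric

variable {ι : Type*} [Fintype ι] {d T : ι → ℝ} {a ℓ m x y : ℝ}

lemma sq_expect_le_expect_sq [Nonempty ι] (f : ι → ℝ) : (𝔼 i, f i) ^ 2 ≤ 𝔼 i, f i ^ 2 := by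
  simpa using expect_mul_sq_le_sq_mul_sq univ f 1

lemma expect_mem_Ioo [Nonempty ι] (hsum : 4 / 9 < ℓ + 𝔼 i, d i)
    (hcut : ℓ ≤ 4 * (𝔼 i, T i) - 4 * (𝔼 i, d i ^ 2) + 𝔼 i, d i)
    (hlink : ∀ i, ℓ ≤ d i ^ 2 - 3 * T i) : 𝔼 i, d i ∈ Set.Ioo (7 / 12) (2 / 3) := by
  have hlink' : ℓ ≤ 𝔼 i, d i ^ 2 - 3 * 𝔼 i, T i := by
    simpa only [expect_sub_distrib, mul_expect] using le_expect univ_nonempty fun i _ => hlink i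
  have hsq := sq_expect_le_expect_sq d
  -- Eliminating `𝔼 T` and `𝔼 d²` from the hypotheses leaves exactly this quadratic in `𝔼 d`.
  have hprod : 0 < (𝔼 i, d i - 7 / 12) * (2 / 3 - 𝔼 i, d i) := by linarith
  constructor <;> nlinarith [hprod]

lemma exists_eq_two_thirds_sub_sq (hm : m ∈ Set.Ioo (7 / 12) (2 / 3)) :
    ∃ y ∈ Set.Ioo (0 : ℝ) 1, m = 2 / 3 - y ^ 2 / 12 := by
  refine ⟨√(8 - 12 * m), ⟨Real.sqrt_pos.2 (by linarith [hm.2]), ?_⟩, ?_⟩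
  · exact (Real.sqrt_lt' one_pos).2 (by linarith [hm.1])
  · rw [Real.sq_sqrt (by linarith [hm.2])]
    ring

lemma tangent_le_cubic (hx : 3 * a ≤ 2 + 2 * m + x) :
    (m ^ 2 - ℓ) * (m - a) + 2 * (1 - a) * m ^ 2
        + (2 * m * (m - a) + (m ^ 2 - ℓ) + 4 * (1 - a) * m) * (x - m) ≤
      (x ^ 2 - ℓ) * (x - a) + 2 * (1 - a) * x ^ 2 := by
  have hrem : 0 ≤ (x - m) ^ 2 * (2 + 2 * m + x - 3 * a) :=
    mul_nonneg (sq_nonneg _) (sub_nonneg.2 hx)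
  linarith

lemma cubic_expect_le [Nonempty ι] (hd0 : ∀ i, 0 ≤ d i) (ha : 3 * a ≤ 2 + 2 * 𝔼 i, d i) :
    ((𝔼 i, d i) ^ 2 - ℓ) * (𝔼 i, d i - a) + 2 * (1 - a) * (𝔼 i, d i) ^ 2 ≤
      𝔼 i, ((d i ^ 2 - ℓ) * (d i - a) + 2 * (1 - a) * d i ^ 2) := by
  set m := 𝔼 i, d i with hm
  have h := expect_le_expect fun i (_ : i ∈ univ) =>
    tangent_le_cubic (a := a) (ℓ := ℓ) (m := m) (x := d i) (by linarith [hd0 i])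
  simpa only [expect_add_distrib, ← mul_expect, expect_sub_distrib, Fintype.expect_const, ← hm,
    sub_self, mul_zero, add_zero] using h

lemma expect_cubic_le [Nonempty ι] (hd1 : ∀ i, d i ≤ 1) (hlink : ∀ i, ℓ ≤ d i ^ 2 - 3 * T i)
    (htri : 3 * 𝔼 i, T i * d i ≤ 3 * a * 𝔼 i, T i) :
    𝔼 i, ((d i ^ 2 - ℓ) * (d i - a) + 2 * (1 - a) * d i ^ 2) ≤
      (1 - a) * (3 * (𝔼 i, d i ^ 2) - 3 * (𝔼 i, T i) - ℓ) := by
  have hpoint : ∀ i, (d i ^ 2 - ℓ) * (d i - a) + 2 * (1 - a) * d i ^ 2 ≤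
      (1 - a) * (3 * d i ^ 2 - 3 * T i - ℓ) + (3 * (T i * d i) - 3 * a * T i) := by
    intro i
    have := mul_nonneg (sub_nonneg.2 (hd1 i)) (sub_nonneg.2 (hlink i))
    linarith
  have h := expect_le_expect fun i (_ : i ∈ univ) => hpoint i
  simp only [expect_add_distrib, expect_sub_distrib, ← mul_expect, Fintype.expect_const] at h ⊢
  linarith

lemma cubic_gap_pos (hy : y ∈ Set.Ioo 0 1) (hm : m = 2 / 3 - y ^ 2 / 12)
    (ha : a = 2 / 3 - y / 12) (hℓ : 4 / 9 < ℓ + m) :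
    (1 - a) * (3 * m / 4 - 7 * ℓ / 4) < (m ^ 2 - ℓ) * (m - a) + 2 * (1 - a) * m ^ 2 := by
  obtain ⟨hy0, hy1⟩ := hy
  have hm_lb : 7 / 12 < m := by nlinarith
  -- The gap is increasing in `ℓ`, and at the critical value `ℓ = 4/9 - m` it factors.
  have hcritical : 0 < (m ^ 2 - (4 / 9 - m)) * (m - a) + 2 * (1 - a) * m ^ 2
      - (1 - a) * (3 * m / 4 - 7 * (4 / 9 - m) / 4) := by
    have hy_poly : (1 / 3 + y / 12) * (y * (1 + y)) ≤ 5 / 12 * (1 * 2) := by gcongr <;> linarith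
    have hfactor : 0 < (m ^ 2 + m - 4 / 9) - (1 / 3 + y / 12) * (y * (1 + y)) / 6 := by
      nlinarith
    calc 0 < y * (1 - y) / 12 * ((m ^ 2 + m - 4 / 9) - (1 / 3 + y / 12) * (y * (1 + y)) / 6) :=
          mul_pos (by nlinarith) hfactor
      _ = _ := by rw [hm, ha]; ring
  have hslope : 0 ≤ (ℓ - (4 / 9 - m)) * (7 / 4 - m - 3 * a / 4) :=
    mul_nonneg (by linarith) (by nlinarith)
  linarith

end Numeric

section Graph

variable {V : Type*} (G : SimpleGraph V) [DecidableRel G.Adj]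

local notation "A" => SimpleGraph.adjMatrix ℝ G

lemma adjMatrix_zero_or_one (x y : V) : A x y = 0 ∨ A x y = 1 :=
  (G.isAdjMatrix_adjMatrix ℝ).zero_or_one x y

lemma adjMatrix_comm (x y : V) : A x y = A y x :=
  G.isSymm_adjMatrix.apply y x

lemma adjMatrix_nonneg (x y : V) : 0 ≤ A x y := by
  rcases adjMatrix_zero_or_one G x y with h | h <;> norm_num [h, -SimpleGraph.adjMatrix_apply]

lemma adjMatrix_le_one (x y : V) : A x y ≤ 1 := by
  rcases adjMatrix_zero_or_one G x y with h | h <;> norm_num [h, -SimpleGraph.adjMatrix_apply]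

section CliqueFree

variable {G}

lemma adjMatrix_mul_common_eq_zero (hG : G.CliqueFree 4) {u v : V} (huv : G.Adj u v) (x y : V) :
    A x y * ((A u x * A v x) * (A u y * A v y)) = 0 := by
  classical
  by_contra h
  simp only [SimpleGraph.adjMatrix_apply, mul_eq_zero, not_or, ite_eq_right_iff, one_ne_zero,
    imp_false, not_not] at h
  obtain ⟨hxy, ⟨hux, hvx⟩, huy, hvy⟩ := h
  refine hG {u, v, x, y} ((SimpleGraph.is3Clique_triple_iff.2 ⟨hvx, hvy, hxy⟩).insert ?_)
  simp [huv, hux, huy]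

lemma adjMatrix_mul_triangle_eq_zero (hG : G.CliqueFree 4) {u v w : V} (huv : G.Adj u v)
    (huw : G.Adj u w) (hvw : G.Adj v w) (x : V) : A u x * A v x * A w x = 0 := by
  simpa [huw, hvw, mul_comm, mul_assoc, mul_left_comm] using
    adjMatrix_mul_common_eq_zero hG huv w x

variable (G) in
/-- In a `K₄`-free graph, the indicator function of the vertices with at most one neighbour in the
triangle `u v w`: no vertex has three, and the three products single out those with two. -/
noncomputable def missedBy (u v w : V) : V → ℝ := 1 - A v * A w - A u * A w - A u * A v

lemma missedBy_zero_or_one (hG : G.CliqueFree 4) {u v w : V} (huv : G.Adj u v) (huw : G.Adj u w)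
    (hvw : G.Adj v w) (x : V) : missedBy G u v w x = 0 ∨ missedBy G u v w x = 1 := by
  have h := adjMatrix_mul_triangle_eq_zero hG huv huw hvw x
  revert h
  simp only [missedBy, Pi.sub_apply, Pi.mul_apply, Pi.one_apply]
  rcases adjMatrix_zero_or_one G u x with hu | hu <;>
    rcases adjMatrix_zero_or_one G v x with hv | hv <;>
    rcases adjMatrix_zero_or_one G w x with hw | hw <;> rw [hu, hv, hw] <;> norm_num

lemma missedBy_le (hG : G.CliqueFree 4) {u v w : V} (huv : G.Adj u v) (huw : G.Adj u w)
    (hvw : G.Adj v w) (x : V) : missedBy G u v w x ≤ 2 - (A u x + A v x + A w x) := by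
  have h := adjMatrix_mul_triangle_eq_zero hG huv huw hvw x
  revert h
  simp only [missedBy, Pi.sub_apply, Pi.mul_apply, Pi.one_apply]
  rcases adjMatrix_zero_or_one G u x with hu | hu <;>
    rcases adjMatrix_zero_or_one G v x with hv | hv <;>
    rcases adjMatrix_zero_or_one G w x with hw | hw <;> rw [hu, hv, hw] <;> norm_num

lemma missedBy_nonneg (hG : G.CliqueFree 4) {u v w : V} (huv : G.Adj u v) (huw : G.Adj u w)
    (hvw : G.Adj v w) : 0 ≤ missedBy G u v w := fun x => by
  rcases missedBy_zero_or_one hG huv huw hvw x with h | h <;> simp [h]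

end CliqueFree

variable [Fintype V]

lemma sum_adjMatrix : ∑ x, ∑ y, A x y = 2 * (#G.edgeFinset : ℝ) := by
  have h := congrArg (Nat.cast (R := ℝ)) G.sum_degrees_eq_twice_card_edges
  push_cast at h
  rw [← h]
  refine sum_congr rfl fun x _ => ?_
  simp [← G.card_neighborFinset_eq_degree, G.neighborFinset_eq_filter]

section Cut

variable [DecidableEq V]

lemma four_mul_cutSize {σ : V → ℝ} (hσ : ∀ x, σ x = -1 ∨ σ x = 1) :
    4 * (G.cutSize {x | σ x = 1} : ℝ) = ∑ x, ∑ y, A x y * ((1 + σ x) * (1 - σ y)) := by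
  rw [SimpleGraph.cutSize, compl_filter, ← filter_product, univ_product_univ, filter_filter,
    card_filter, Fintype.sum_prod_type]
  push_cast
  simp_rw [mul_sum, SimpleGraph.adjMatrix_apply]
  refine sum_congr rfl fun x _ => sum_congr rfl fun y _ => ?_
  rcases hσ x with hx | hx <;> rcases hσ y with hy | hy <;> norm_num [hx, hy]

lemma sum_adjMatrix_mul_sign {σ : V → ℝ} (hσ : ∀ x, σ x = -1 ∨ σ x = 1) :
    ∑ x, ∑ y, A x y * (σ x * σ y) =
      2 * (#G.edgeFinset : ℝ) - 4 * G.cutSize {x | σ x = 1} := by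
  have hswap : ∑ x, ∑ y, A x y * σ y = ∑ x, ∑ y, A x y * σ x := by
    rw [sum_comm]
    exact sum_congr rfl fun x _ => sum_congr rfl fun y _ => by rw [adjMatrix_comm]
  rw [four_mul_cutSize G hσ, ← sum_adjMatrix]
  simp only [mul_add, mul_sub, add_mul, sum_add_distrib, sum_sub_distrib, mul_one, one_mul, hswap]
  ring

end Cut

section Turan

variable {G}

lemma card_edgeFinset_le_of_cliqueFree {r : ℕ} (hG : G.CliqueFree (r + 2)) :
    2 * (r + 1) * #G.edgeFinset ≤ r * Fintype.card V ^ 2 :=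
  (Nat.mul_le_mul_left _ (hG.card_edgeFinset_le.trans_eq
    SimpleGraph.card_edgeFinset_turanGraph.symm)).trans
    SimpleGraph.mul_card_edgeFinset_turanGraph_le

lemma quadForm_adjMatrix_le_of_cliqueFree {r : ℕ} (hG : G.CliqueFree (r + 2)) {f : V → ℝ}
    (hf : ∀ x, f x = 0 ∨ f x = 1) : (r + 1) * quadForm A f ≤ r * (𝔼 x, f x) ^ 2 := by
  classical
  set R : Finset V := {x | f x = 1} with hR
  have hsum : ∑ x, f x = #R := by
    rw [hR, card_filter]
    push_cast
    refine sum_congr rfl fun x _ => ?_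
    rcases hf x with h | h <;> simp [h]
  have hform : ∑ x, ∑ y, A x y * (f x * f y) = 2 * #(G.induce (R : Set V)).edgeFinset := by
    rw [← sum_adjMatrix]
    calc ∑ x, ∑ y, A x y * (f x * f y) = ∑ x ∈ R, ∑ y ∈ R, A x y := by
          simp only [hR, sum_filter]
          refine sum_congr rfl fun x _ => ?_
          rcases hf x with hx | hx
          · simp [hx]
          · rw [if_pos hx]
            refine sum_congr rfl fun y _ => ?_
            rcases hf y with hy | hy <;> simp [hx, hy]
      _ = ∑ x : (R : Set V), ∑ y : (R : Set V), A x y := by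
          simp_rw [← sum_coe_sort R]
          rfl
  have hturan : 2 * (r + 1) * (#(G.induce (R : Set V)).edgeFinset : ℝ) ≤ r * (#R : ℝ) ^ 2 := by
    have hfree : (G.induce (R : Set V)).CliqueFree (r + 2) :=
      hG.comap ⟨(SimpleGraph.Embedding.induce (R : Set V)).toCopy⟩
    simpa using (Nat.cast_le (α := ℝ)).2 (card_edgeFinset_le_of_cliqueFree hfree)
  rw [quadForm_eq_sum_div, hform, Fintype.expect_eq_sum_div_card, hsum, div_pow, ← mul_div_assoc,
    ← mul_div_assoc]
  exact div_le_div_of_nonneg_right (by linarith) (sq_nonneg _)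

end Turan

section Densities

/-- The degree of `v` as a fraction of the number of vertices. -/
noncomputable def degDensity (v : V) : ℝ := 𝔼 x, A v x

/-- The number of common neighbours of `u` and `v` as a fraction of the number of vertices. -/
noncomputable def codegDensity (u v : V) : ℝ := 𝔼 x, A u x * A v x

/-- The proportion of ordered pairs of vertices that form a triangle with `v`. -/
noncomputable def triDensity (v : V) : ℝ := quadForm A (A v)

lemma degDensity_nonneg (v : V) : 0 ≤ degDensity G v :=
  expect_nonneg fun x _ => adjMatrix_nonneg G v x

lemma degDensity_le_one [Nonempty V] (v : V) : degDensity G v ≤ 1 :=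
  expect_le univ_nonempty fun x _ => adjMatrix_le_one G v x

lemma quadForm_adjMatrix_one : quadForm A 1 = 𝔼 v, degDensity G v := by
  simp [quadForm, degDensity]

lemma expect_degDensity : 𝔼 v, degDensity G v = 2 * #G.edgeFinset / (Fintype.card V : ℝ) ^ 2 := by
  rw [← quadForm_adjMatrix_one, quadForm_eq_sum_div, ← sum_adjMatrix]
  simp only [Pi.one_apply, mul_one]

lemma triDensity_eq_expect (v : V) :
    triDensity G v = 𝔼 x, A v x * codegDensity G x v := by
  simp only [triDensity, quadForm, codegDensity, mul_expect]
  exact expect_congr rfl fun x _ => expect_congr rfl fun y _ => by ring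

lemma expect_adjMatrix_mul_degDensity :
    𝔼 v, 𝔼 x, A v x * degDensity G x = 𝔼 x, degDensity G x ^ 2 := by
  rw [expect_comm]
  refine expect_congr rfl fun x _ => ?_
  simp_rw [← expect_mul, adjMatrix_comm G _ x]
  rw [← degDensity, sq]

lemma expect_adjMatrix_mul_expect (v : V) (f : V → ℝ) :
    𝔼 u, A v u * 𝔼 x, A v x * A u x * f x = 𝔼 x, A v x * codegDensity G x v * f x := by
  simp only [codegDensity, mul_expect, expect_mul]
  rw [expect_comm]
  refine expect_congr rfl fun x _ => expect_congr rfl fun u _ => ?_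
  rw [adjMatrix_comm G x u]
  ring

lemma three_mul_expect_triDensity_mul (f : V → ℝ) :
    3 * 𝔼 u, triDensity G u * f u =
      𝔼 u, 𝔼 v, 𝔼 w, A v w * (A u v * A u w) * (f u + f v + f w) := by
  have hu : 𝔼 u, triDensity G u * f u = 𝔼 u, 𝔼 v, 𝔼 w, A v w * (A u v * A u w) * f u := by
    simp only [triDensity, quadForm, expect_mul]
  have hv : 𝔼 u, triDensity G u * f u = 𝔼 u, 𝔼 v, 𝔼 w, A v w * (A u v * A u w) * f v := by
    rw [hu, expect_comm]
    refine expect_congr rfl fun v _ => expect_congr rfl fun u _ => expect_congr rfl fun w _ => ?_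
    rw [adjMatrix_comm G u v]
    ring
  have hw : 𝔼 u, triDensity G u * f u = 𝔼 u, 𝔼 v, 𝔼 w, A v w * (A u v * A u w) * f w := by
    rw [hv]
    refine expect_congr rfl fun u _ => ?_
    rw [expect_comm]
    refine expect_congr rfl fun v _ => expect_congr rfl fun w _ => ?_
    rw [adjMatrix_comm G w v]
    ring
  simp only [mul_add, expect_add_distrib, ← hu, ← hv, ← hw]
  ring

lemma three_mul_expect_triDensity_mul_le {f : V → ℝ} {c : ℝ}
    (hf : ∀ u v w, G.Adj u v → G.Adj u w → G.Adj v w → f u + f v + f w ≤ c) :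
    3 * 𝔼 u, triDensity G u * f u ≤ c * 𝔼 u, triDensity G u := by
  rw [three_mul_expect_triDensity_mul]
  simp only [triDensity, quadForm, mul_expect]
  refine expect_le_expect fun u _ => expect_le_expect fun v _ => expect_le_expect fun w _ => ?_
  simp only [SimpleGraph.adjMatrix_apply]
  split_ifs with hvw huv huw
  · simpa using hf u v w huv huw hvw
  all_goals simp

end Densities

section CubeLowerBound

/-- `ℓ` bounds the normalised adjacency form of `G` from below on the cube `[-1, 1]^V`. The vertices
of the cube are the cuts of `G`, so this is a relaxation of an upper bound on all cuts. -/
def IsCubeLowerBound (ℓ : ℝ) : Prop :=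
  ∀ s ∈ Set.Icc (-1 : V → ℝ) 1, ℓ ≤ quadForm A s

lemma isCubeLowerBound_maxCut [DecidableEq V] :
    IsCubeLowerBound G ((2 * #G.edgeFinset - 4 * G.maxCut) / (Fintype.card V : ℝ) ^ 2) := by
  intro s hs
  obtain ⟨σ, hσ, hle⟩ := exists_sign_quadForm_le (M := A) (fun x => by simp) hs
  have hcut : G.cutSize {x | σ x = 1} ≤ G.maxCut := le_sup (f := G.cutSize) (mem_univ _)
  refine le_trans ?_ hle
  rw [quadForm_eq_sum_div, sum_adjMatrix_mul_sign G hσ]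
  gcongr

variable {G} {ℓ : ℝ}

lemma IsCubeLowerBound.le_neighborCut (hℓ : IsCubeLowerBound G ℓ) (v : V) :
    ℓ ≤ 4 * triDensity G v - 4 * (𝔼 x, A v x * degDensity G x) + 𝔼 x, degDensity G x := by
  have h := hℓ (2 * A v - 1) (by
    constructor <;> intro x <;> rcases adjMatrix_zero_or_one G v x with h | h <;>
      norm_num [h, -SimpleGraph.adjMatrix_apply])
  rw [quadForm_two_mul_sub G.isSymm_adjMatrix, quadForm_adjMatrix_one] at h
  simpa only [triDensity, degDensity, Pi.one_apply, mul_one] using h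

lemma IsCubeLowerBound.le_expect [Nonempty V] (hℓ : IsCubeLowerBound G ℓ) :
    ℓ ≤ 4 * (𝔼 v, triDensity G v) - 4 * (𝔼 v, degDensity G v ^ 2) + 𝔼 v, degDensity G v := by
  have h := Finset.le_expect univ_nonempty fun v _ => hℓ.le_neighborCut v
  rwa [expect_add_distrib, expect_sub_distrib, ← mul_expect, ← mul_expect,
    expect_adjMatrix_mul_degDensity, Fintype.expect_const] at h

lemma quadForm_common_eq_zero (hG : G.CliqueFree 4) {u v : V} (huv : G.Adj u v) :
    quadForm A (A u * A v) = 0 :=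
  expect_eq_zero fun x _ => expect_eq_zero fun y _ => adjMatrix_mul_common_eq_zero hG huv x y

lemma IsCubeLowerBound.le_of_adj (hℓ : IsCubeLowerBound G ℓ) (hG : G.CliqueFree 4) {v u : V}
    (hvu : G.Adj v u) :
    ℓ ≤ triDensity G v - 4 * 𝔼 x, A v x * A u x * codegDensity G x v := by
  have h := hℓ (2 * (A v * A u) - A v) (by
    constructor <;> intro x <;> rcases adjMatrix_zero_or_one G v x with h | h <;>
      rcases adjMatrix_zero_or_one G u x with h' | h' <;>
      norm_num [h, h', -SimpleGraph.adjMatrix_apply])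
  rw [quadForm_two_mul_sub G.isSymm_adjMatrix, quadForm_common_eq_zero hG hvu] at h
  simp only [triDensity, codegDensity, Pi.mul_apply] at h ⊢
  linarith

lemma IsCubeLowerBound.degDensity_mul_le (hℓ : IsCubeLowerBound G ℓ) (hG : G.CliqueFree 4) (v : V) :
    degDensity G v * ℓ ≤
      degDensity G v * triDensity G v - 4 * 𝔼 x, A v x * codegDensity G x v ^ 2 := by
  have h : 𝔼 u, A v u * ℓ ≤
      𝔼 u, A v u * (triDensity G v - 4 * 𝔼 x, A v x * A u x * codegDensity G x v) := by
    refine expect_le_expect fun u _ => ?_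
    by_cases hvu : G.Adj v u
    · simpa [hvu] using hℓ.le_of_adj hG hvu
    · simp [hvu]
  simp_rw [mul_sub, mul_left_comm _ (4 : ℝ), expect_sub_distrib, ← expect_mul, ← mul_expect] at h
  rw [expect_adjMatrix_mul_expect] at h
  simpa only [degDensity, sq, mul_assoc] using h

lemma degDensity_mul_triDensity_le (v : V) :
    degDensity G v * triDensity G v - degDensity G v ^ 3 / 4 ≤
      𝔼 x, A v x * codegDensity G x v ^ 2 := by
  set d := degDensity G v with hd
  calc d * triDensity G v - d ^ 3 / 4
      = 𝔼 x, A v x * (d * codegDensity G x v - d ^ 2 / 4) := by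
        simp_rw [mul_sub, mul_left_comm _ d, expect_sub_distrib, ← mul_expect, ← expect_mul]
        rw [← triDensity_eq_expect, ← degDensity, ← hd]
        ring
    _ ≤ 𝔼 x, A v x * codegDensity G x v ^ 2 := by
        refine expect_le_expect fun x _ =>
          mul_le_mul_of_nonneg_left ?_ (adjMatrix_nonneg G v x)
        linarith [sq_nonneg (codegDensity G x v - d / 2)]

lemma triDensity_eq_zero_of_degDensity_eq_zero {v : V} (hv : degDensity G v = 0) :
    triDensity G v = 0 := by
  have hA : ∀ x, A v x = 0 := fun x =>
    (expect_eq_zero_iff_of_nonneg fun x _ => adjMatrix_nonneg G v x).1 hv x (mem_univ x)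
  rw [triDensity_eq_expect]
  exact expect_eq_zero fun x _ => by rw [hA, zero_mul]

lemma IsCubeLowerBound.le_sq_sub (hℓ : IsCubeLowerBound G ℓ) (hG : G.CliqueFree 4) (v : V) :
    ℓ ≤ degDensity G v ^ 2 - 3 * triDensity G v := by
  rcases (degDensity_nonneg G v).eq_or_lt with hv | hv
  · rw [triDensity_eq_zero_of_degDensity_eq_zero hv.symm, ← hv]
    simpa [quadForm] using hℓ 0 (by constructor <;> intro x <;> simp)
  · refine le_of_mul_le_mul_left ?_ hv
    linarith [hℓ.degDensity_mul_le hG v, degDensity_mul_triDensity_le (G := G) v]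

lemma IsCubeLowerBound.three_mul_le (hℓ : IsCubeLowerBound G ℓ) {α β γ : V → ℝ} (hα : 0 ≤ α)
    (hβ : 0 ≤ β) (hγ : 0 ≤ γ) (hsum : 0 ≤ 1 - α - β - γ) :
    3 * ℓ ≤ 4 * quadForm A (1 - α - β - γ) - quadForm A 1
      + 4 * (quadForm A α + quadForm A β + quadForm A γ) := by
  have mem_cube : ∀ p q r : V → ℝ, 0 ≤ p → 0 ≤ q → 0 ≤ r → 0 ≤ 1 - p - q - r →
      1 - 2 * (q + r) ∈ Set.Icc (-1 : V → ℝ) 1 := by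
    intro p q r hp hq hr hpqr
    constructor <;> intro x
    · have := hp x
      have := hpqr x
      simp only [Pi.neg_apply, Pi.sub_apply, Pi.mul_apply, Pi.add_apply,
        Pi.ofNat_apply] at *
      linarith
    · have := hq x
      have := hr x
      simp only [Pi.sub_apply, Pi.mul_apply, Pi.add_apply, Pi.ofNat_apply] at *
      linarith
  rw [← quadForm_three_cuts]
  have hβγ := hℓ _ (mem_cube α β γ hα hβ hγ hsum)
  have hαγ := hℓ _ (mem_cube β α γ hβ hα hγ (by rwa [sub_right_comm 1 β α]))
  have hαβ := hℓ _ (mem_cube γ α β hγ hα hβ (by rwa [sub_right_comm 1 γ α, sub_right_comm _ γ β]))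
  linarith

section Triangle

variable {u v w : V}

lemma expect_missedBy_le (hG : G.CliqueFree 4) (huv : G.Adj u v) (huw : G.Adj u w)
    (hvw : G.Adj v w) :
    𝔼 x, missedBy G u v w x ≤ 2 - (degDensity G u + degDensity G v + degDensity G w) := by
  have : Nonempty V := ⟨u⟩
  have h := expect_le_expect fun x (_ : x ∈ univ) => missedBy_le hG huv huw hvw x
  rwa [expect_sub_distrib, expect_add_distrib, expect_add_distrib, Fintype.expect_const] at h

lemma IsCubeLowerBound.le_quadForm_missedBy (hℓ : IsCubeLowerBound G ℓ) (hG : G.CliqueFree 4)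
    (huv : G.Adj u v) (huw : G.Adj u w) (hvw : G.Adj v w) :
    3 * ℓ + 𝔼 x, degDensity G x ≤ 4 * quadForm A (missedBy G u v w) := by
  have common_nonneg : ∀ p q : V, 0 ≤ A p * A q := fun p q x =>
    mul_nonneg (adjMatrix_nonneg G p x) (adjMatrix_nonneg G q x)
  have h := hℓ.three_mul_le (common_nonneg v w) (common_nonneg u w) (common_nonneg u v)
    (missedBy_nonneg hG huv huw hvw)
  rw [quadForm_common_eq_zero hG hvw, quadForm_common_eq_zero hG huw,
    quadForm_common_eq_zero hG huv, quadForm_adjMatrix_one, ← missedBy] at h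
  linarith

lemma IsCubeLowerBound.degDensity_add_le (hℓ : IsCubeLowerBound G ℓ) (hG : G.CliqueFree 4)
    (huv : G.Adj u v) (huw : G.Adj u w) (hvw : G.Adj v w) {y : ℝ}
    (hy : y ^ 2 / 6 ≤ 3 * ℓ + 𝔼 x, degDensity G x) :
    degDensity G u + degDensity G v + degDensity G w ≤ 2 - y / 4 := by
  have hturan := quadForm_adjMatrix_le_of_cliqueFree (r := 2) hG
    (missedBy_zero_or_one hG huv huw hvw)
  simp only [Nat.cast_ofNat] at hturan
  have hform := hℓ.le_quadForm_missedBy hG huv huw hvw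
  have hmissed : y / 4 ≤ 𝔼 x, missedBy G u v w x :=
    le_of_abs_le (abs_le_of_sq_le_sq (by linarith)
      (expect_nonneg fun x _ => missedBy_nonneg hG huv huw hvw x))
  linarith [expect_missedBy_le hG huv huw hvw]

end Triangle

theorem IsCubeLowerBound.add_expect_degDensity_le [Nonempty V] (hℓ : IsCubeLowerBound G ℓ)
    (hG : G.CliqueFree 4) : ℓ + 𝔼 v, degDensity G v ≤ 4 / 9 := by
  by_contra! hlt
  have hlink := hℓ.le_sq_sub hG
  obtain ⟨y, hy, hm⟩ := exists_eq_two_thirds_sub_sq (expect_mem_Ioo hlt hℓ.le_expect hlink)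
  set a := 2 / 3 - y / 12 with ha
  have htri : 3 * 𝔼 v, triDensity G v * degDensity G v ≤ 3 * a * 𝔼 v, triDensity G v :=
    three_mul_expect_triDensity_mul_le G fun u v w huv huw hvw =>
      (hℓ.degDensity_add_le hG huv huw hvw (y := y) (by linarith)).trans_eq (by rw [ha]; ring)
  have hlower := cubic_expect_le (ℓ := ℓ) (a := a) (degDensity_nonneg G)
    (by rw [hm, ha]; nlinarith [hy.1, hy.2])
  have hupper := expect_cubic_le (degDensity_le_one G) hlink htri
  have hcut := mul_le_mul_of_nonneg_left hℓ.le_expect (show 0 ≤ 1 - a by rw [ha]; linarith [hy.1])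
  linarith [cubic_gap_pos hy hm ha hlt]

end CubeLowerBound

end Graph

end MaxCut

/-- Every `K₄`-free graph `G` on `n` vertices can be made bipartite by deleting at
most `n² / 9` edges; that is, `e(G) - b(G) ≤ n² / 9`. -/
theorem K4_free_max_cut {V : Type*} [Fintype V] [DecidableEq V]
    (G : SimpleGraph V) [DecidableRel G.Adj] (hG : G.CliqueFree 4) :
    (G.edgeFinset.card : ℝ) - G.maxCut ≤ (Fintype.card V : ℝ) ^ 2 / 9 := by
  rcases isEmpty_or_nonempty V with hV | hV
  · have hedge : G.edgeFinset.card = 0 := by simp [Subsingleton.elim G ⊥]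
    rw [hedge, Fintype.card_eq_zero]
    simp
  · have h := (MaxCut.isCubeLowerBound_maxCut G).add_expect_degDensity_le hG
    have hcard : (0 : ℝ) < (Fintype.card V : ℝ) ^ 2 := by positivity
    rw [MaxCut.expect_degDensity, ← add_div, div_le_iff₀ hcard] at h
    linarith
end

section
/- If G is a K4-free graph on n vertices that cannot be made bipartite by deleting fewer than n^2/9 edges (i.e., e(G) - b(G) ≥ n^2/9), then 3 divides n and G is the complete 3-partite graph with three parts of size n/3 each. -/
open Finset

/-! Write `n`, `e`, `b` and `T` for the numbers of vertices, edges, edges in a largest cut and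
ordered triangles of `G`, and `N(v)` and `d(v)` for the neighborhood and degree of `v`. Three kinds
of cuts bound `b` from below.

* The cuts between `N(v)` and its complement, averaged over `v`, give `∑ d(v)² ≤ n b + T`.
* For an edge `uv`, split `N(v)` into its independent part inside `N(u)` and the rest, and place
  the remaining vertices at random. Averaging over `u` and `v` gives
  `2 e n + 3 T ≤ 4 b n + ∑ d(v)²`.
* In a `K₄`-free graph every vertex has at most two neighbors in a given triangle, so the common
  neighborhoods of its three sides are disjoint independent sets. Together with the set of the `r`
  remaining vertices they form a four-coloring. Grouping the four classes two and two yields three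
  cuts, whence `2 e ≤ 3 b + r²`; and for a suitable triangle `3 T + 2 e r ≤ 2 e n`.

Combined with `(2 e)² ≤ n ∑ d(v)²` and `b ≤ e - n² / 9`, the first two bounds locate the density
`2 e / n²` in `[7/12, 2/3]` and the third one then pushes it to `2/3`. Thus `G` attains the Turán
bound for `K₄`-free graphs, and the equality case of Turán's theorem describes it.
-/

namespace MaxCut

section Interedges

variable {V : Type*} (G : SimpleGraph V) [DecidableRel G.Adj]

lemma card_interedges_comm (S T : Finset V) : #(G.interedges S T) = #(G.interedges T S) :=
  have := G.symm
  Rel.card_interedges_comm S T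

lemma interedges_self_eq_empty_of_isIndepSet {S : Finset V} (hS : G.IsIndepSet S) :
    G.interedges S S = ∅ := by
  refine eq_empty_of_forall_notMem fun ⟨x, y⟩ h ↦ ?_
  obtain ⟨hx, hy, hxy⟩ := G.mk_mem_interedges_iff.1 h
  exact hS hx hy hxy.ne hxy

lemma card_interedges_union_left [DecidableEq V] {S S' : Finset V} (h : Disjoint S S')
    (T : Finset V) :
    #(G.interedges (S ∪ S') T) = #(G.interedges S T) + #(G.interedges S' T) := by
  have union : G.interedges (S ∪ S') T = G.interedges S T ∪ G.interedges S' T := by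
    simp only [SimpleGraph.interedges, Rel.interedges, union_product, filter_union]
  rw [union, card_union_of_disjoint (G.interedges_disjoint_left h T)]

lemma card_interedges_union_right [DecidableEq V] (S : Finset V) {T T' : Finset V}
    (h : Disjoint T T') :
    #(G.interedges S (T ∪ T')) = #(G.interedges S T) + #(G.interedges S T') := by
  simp only [card_interedges_comm G S, card_interedges_union_left G h]

variable [Fintype V]

lemma card_interedges_eq_sum_card_inter [DecidableEq V] (S T : Finset V) :
    #(G.interedges S T) = ∑ x ∈ S, #(G.neighborFinset x ∩ T) := by
  simp only [SimpleGraph.interedges, Rel.interedges, card_filter, sum_product]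
  refine sum_congr rfl fun x _ ↦ ?_
  rw [← card_filter, inter_comm, ← filter_mem_eq_inter]
  simp only [SimpleGraph.mem_neighborFinset]

lemma card_interedges_univ_right (S : Finset V) :
    #(G.interedges S univ) = ∑ x ∈ S, G.degree x := by
  classical simp [card_interedges_eq_sum_card_inter]

lemma card_interedges_univ_univ : #(G.interedges univ univ) = 2 * #G.edgeFinset := by
  rw [card_interedges_univ_right, G.sum_degrees_eq_twice_card_edges]

variable [DecidableEq V]

lemma card_interedges_insert_left {r : V} {S : Finset V} (hr : r ∉ S) (T : Finset V) :
    #(G.interedges (insert r S) T) = #(G.neighborFinset r ∩ T) + #(G.interedges S T) := by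
  simp only [card_interedges_eq_sum_card_inter, sum_insert hr]

lemma card_interedges_insert_right (S : Finset V) {r : V} {T : Finset V} (hr : r ∉ T) :
    #(G.interedges S (insert r T)) = #(G.neighborFinset r ∩ S) + #(G.interedges S T) := by
  simp only [card_interedges_comm G S, card_interedges_insert_left G hr]

lemma card_interedges_insert_insert {r : V} {S : Finset V} (hr : r ∉ S) :
    #(G.interedges (insert r S) (insert r S)) =
      2 * #(G.neighborFinset r ∩ S) + #(G.interedges S S) := by
  have self : G.neighborFinset r ∩ insert r S = G.neighborFinset r ∩ S :=
    inter_insert_of_notMem (by simp)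
  rw [card_interedges_insert_left G hr, self, card_interedges_insert_right G S hr]
  ring

end Interedges

section Cuts

variable {V : Type*} [Fintype V] [DecidableEq V] (G : SimpleGraph V) [DecidableRel G.Adj]

lemma card_interedges_compl_le_maxCut (S : Finset V) : #(G.interedges S Sᶜ) ≤ G.maxCut :=
  le_sup (f := G.cutSize) (mem_univ S)

/- Placing a vertex `r` outside `S ∪ T` on a uniformly random side does not change the expectation
of `4 e(S, T) - e(S ∪ T, S ∪ T)`, so one of the two sides does not decrease it. -/
lemma four_mul_card_interedges_add_le_of_disjoint {S T : Finset V} (hST : Disjoint S T) :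
    4 * #(G.interedges S T) + 2 * #G.edgeFinset ≤
      4 * G.maxCut + #(G.interedges (S ∪ T) (S ∪ T)) := by
  induction hk : #(S ∪ T)ᶜ generalizing S T with
  | zero =>
    have cover : S ∪ T = univ := (compl_eq_empty_iff _).1 (card_eq_zero.1 hk)
    have compl : Sᶜ = T := (IsCompl.of_eq hST.eq_bot cover).compl_eq
    have cut := card_interedges_compl_le_maxCut G S
    rw [cover, card_interedges_univ_univ, ← compl]
    lia
  | succ k ih =>
    obtain ⟨r, hr⟩ := card_pos.1 (k.succ_pos.trans_eq hk.symm)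
    have hrST : r ∉ S ∪ T := mem_compl.1 hr
    obtain ⟨hrS, hrT⟩ := notMem_union.1 hrST
    have card_eq : #(insert r (S ∪ T))ᶜ = k := by
      rw [compl_insert, card_erase_of_mem hr, hk, Nat.add_sub_cancel]
    have left := ih (S := insert r S) (T := T) (disjoint_insert_left.2 ⟨hrT, hST⟩)
      (by rwa [insert_union])
    have right := ih (S := S) (T := insert r T) (disjoint_insert_right.2 ⟨hrS, hST⟩)
      (by rwa [union_insert])
    rw [insert_union, card_interedges_insert_insert G hrST,
      card_interedges_insert_left G hrS] at left
    rw [union_insert, card_interedges_insert_insert G hrST,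
      card_interedges_insert_right G S hrT] at right
    have split : #(G.neighborFinset r ∩ (S ∪ T)) =
        #(G.neighborFinset r ∩ S) + #(G.neighborFinset r ∩ T) := by
      rw [inter_union_distrib_left,
        card_union_of_disjoint (hST.mono inter_subset_right inter_subset_right)]
    lia

lemma card_bichromatic_le_two_mul_maxCut (c : V → Bool) :
    #{p ∈ G.interedges univ univ | c p.1 ≠ c p.2} ≤ 2 * G.maxCut := by
  set S : Finset V := {x | c x}
  have cover : {p ∈ G.interedges univ univ | c p.1 ≠ c p.2} ⊆
      G.interedges S Sᶜ ∪ G.interedges Sᶜ Sᶜᶜ := by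
    rintro ⟨x, y⟩ h
    cases hx : c x <;> cases hy : c y <;>
      simp_all [S, SimpleGraph.mk_mem_interedges_iff]
  calc _ ≤ #(G.interedges S Sᶜ) + #(G.interedges Sᶜ Sᶜᶜ) :=
        (card_le_card cover).trans (card_union_le _ _)
    _ ≤ 2 * G.maxCut := by
        linarith [card_interedges_compl_le_maxCut G S, card_interedges_compl_le_maxCut G Sᶜ]

/- Two distinct elements of `Bool × Bool` are separated by exactly two of the three balanced
bipartitions `fst`, `snd` and `xor`. -/
lemma card_bichromatic_le_three_mul_maxCut (c : V → Bool × Bool) :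
    #{p ∈ G.interedges univ univ | c p.1 ≠ c p.2} ≤ 3 * G.maxCut := by
  have separated : ∀ a b : Bool × Bool, 2 * (if a ≠ b then 1 else 0) =
      (if a.1 ≠ b.1 then 1 else 0) + (if a.2 ≠ b.2 then 1 else 0) +
        (if (a.1 ^^ a.2) ≠ (b.1 ^^ b.2) then 1 else 0) := by decide
  have double_count : 2 * #{p ∈ G.interedges univ univ | c p.1 ≠ c p.2} =
      #{p ∈ G.interedges univ univ | (c p.1).1 ≠ (c p.2).1} +
        #{p ∈ G.interedges univ univ | (c p.1).2 ≠ (c p.2).2} +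
        #{p ∈ G.interedges univ univ | ((c p.1).1 ^^ (c p.1).2) ≠ ((c p.2).1 ^^ (c p.2).2)} := by
    simp only [card_filter, mul_sum, separated, sum_add_distrib]
  have fst := card_bichromatic_le_two_mul_maxCut G fun x ↦ (c x).1
  have snd := card_bichromatic_le_two_mul_maxCut G fun x ↦ (c x).2
  have xor := card_bichromatic_le_two_mul_maxCut G fun x ↦ (c x).1 ^^ (c x).2
  lia

lemma two_mul_card_edgeFinset_le_of_isIndepSet (c : V → Bool × Bool) (a : Bool × Bool)
    (h : ∀ b ≠ a, G.IsIndepSet {x | c x = b}) :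
    2 * #G.edgeFinset ≤ 3 * G.maxCut + #{x | c x = a} ^ 2 := by
  set R : Finset V := {x | c x = a}
  have mono : {p ∈ G.interedges univ univ | ¬c p.1 ≠ c p.2} ⊆ R ×ˢ R := by
    rintro ⟨x, y⟩ hxy
    obtain ⟨adj, eq⟩ : G.Adj x y ∧ c x = c y := by
      simpa [SimpleGraph.mk_mem_interedges_iff] using hxy
    have hx : c x = a := by
      by_contra hne
      exact h (c x) hne rfl eq.symm adj.ne adj
    simp [R, hx, ← eq]
  have split := card_filter_add_card_filter_not (s := G.interedges univ univ)
    fun p ↦ c p.1 ≠ c p.2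
  calc 2 * #G.edgeFinset = _ := (card_interedges_univ_univ G).symm.trans split.symm
    _ ≤ 3 * G.maxCut + #(R ×ˢ R) :=
        add_le_add (card_bichromatic_le_three_mul_maxCut G c) (card_le_card mono)
    _ = 3 * G.maxCut + #R ^ 2 := by rw [card_product, sq]

end Cuts

section Codegree

variable {V : Type*} [Fintype V] (G : SimpleGraph V) [DecidableRel G.Adj]

lemma sum_neighborFinset_comm {M : Type*} [AddCommMonoid M] (f : V → V → M) :
    ∑ v, ∑ x ∈ G.neighborFinset v, f v x = ∑ x, ∑ v ∈ G.neighborFinset x, f v x :=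
  sum_comm' fun v x ↦ by simp [G.adj_comm]

/-- The triples of pairwise adjacent vertices, which count every triangle of `G` six times. The
condition is written cyclically so that it is visibly invariant under rotation. -/
def orderedTriangles : Finset (V × V × V) :=
  {t | G.Adj t.1 t.2.1 ∧ G.Adj t.2.1 t.2.2 ∧ G.Adj t.2.2 t.1}

lemma sum_orderedTriangles_rotate {M : Type*} [AddCommMonoid M] (f : V → V → V → M) :
    ∑ t ∈ orderedTriangles G, f t.2.1 t.2.2 t.1 = ∑ t ∈ orderedTriangles G, f t.1 t.2.1 t.2.2 := by
  refine sum_nbij' (fun t ↦ (t.2.1, t.2.2, t.1)) (fun t ↦ (t.2.2, t.1, t.2.1)) ?_ ?_ ?_ ?_ ?_ <;>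
    simp +contextual [orderedTriangles]

variable [DecidableEq V]

/-- The number of common neighbors of `u` and `v`; for an edge `uv`, the number of triangles
containing it. -/
def codegree (u v : V) : ℕ := #(G.neighborFinset u ∩ G.neighborFinset v)

lemma codegree_comm (u v : V) : codegree G u v = codegree G v u := by
  rw [codegree, codegree, inter_comm]

lemma card_interedges_neighborFinset (v : V) (S : Finset V) :
    #(G.interedges S (G.neighborFinset v)) = ∑ x ∈ S, codegree G v x := by
  rw [card_interedges_eq_sum_card_inter]
  exact sum_congr rfl fun x _ ↦ codegree_comm G x v

lemma sum_orderedTriangles {M : Type*} [AddCommMonoid M] (f : V → V → M) :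
    ∑ t ∈ orderedTriangles G, f t.1 t.2.1 =
      ∑ u, ∑ v ∈ G.neighborFinset u, codegree G u v • f u v := by
  rw [sum_finset_product (orderedTriangles G) univ fun u ↦
    G.interedges (G.neighborFinset u) (G.neighborFinset u)]
  · refine sum_congr rfl fun u _ ↦ ?_
    rw [sum_finset_product _ (G.neighborFinset u) fun v ↦ G.neighborFinset u ∩ G.neighborFinset v]
    · simp only [sum_const, codegree]
    · simp [SimpleGraph.mem_interedges_iff]
  · intro t
    simp only [orderedTriangles, mem_filter_univ, mem_univ, true_and,
      SimpleGraph.mem_interedges_iff, G.mem_neighborFinset, G.adj_comm t.2.2 t.1]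
    tauto

lemma card_orderedTriangles :
    #(orderedTriangles G) = ∑ u, ∑ v ∈ G.neighborFinset u, codegree G u v := by
  rw [card_eq_sum_ones, sum_orderedTriangles G fun _ _ ↦ 1]
  simp only [smul_eq_mul, mul_one]

lemma card_orderedTriangles_sq_le :
    #(orderedTriangles G) ^ 2 ≤
      2 * #G.edgeFinset * ∑ u, ∑ v ∈ G.neighborFinset u, codegree G u v ^ 2 := by
  have card_pairs : #(univ.sigma fun u ↦ G.neighborFinset u) = 2 * #G.edgeFinset := by
    simp [card_sigma, G.sum_degrees_eq_twice_card_edges]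
  rw [card_orderedTriangles, sum_sigma', sum_sigma', ← card_pairs]
  exact sq_sum_le_card_mul_sum_sq

lemma exists_three_mul_card_orderedTriangles_le (h : (orderedTriangles G).Nonempty) :
    ∃ u v w, G.Adj u v ∧ G.Adj v w ∧ G.Adj w u ∧
      3 * #(orderedTriangles G) ≤
        2 * #G.edgeFinset * (codegree G u v + codegree G v w + codegree G w u) := by
  have sum_fst : ∑ t ∈ orderedTriangles G, codegree G t.1 t.2.1 =
      ∑ u, ∑ v ∈ G.neighborFinset u, codegree G u v ^ 2 := by
    simp only [sum_orderedTriangles, smul_eq_mul, sq]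
  have sum_snd := sum_orderedTriangles_rotate G fun u v _ ↦ codegree G u v
  have sum_trd := sum_orderedTriangles_rotate G fun _ v w ↦ codegree G v w
  have average : ∑ _t ∈ orderedTriangles G, 3 * #(orderedTriangles G) ≤
      ∑ t ∈ orderedTriangles G, 2 * #G.edgeFinset *
        (codegree G t.1 t.2.1 + codegree G t.2.1 t.2.2 + codegree G t.2.2 t.1) := by
    simp only [← mul_sum, sum_add_distrib, sum_trd, sum_snd, sum_fst, sum_const, smul_eq_mul]
    linarith [card_orderedTriangles_sq_le G]
  obtain ⟨⟨u, v, w⟩, ht, hle⟩ := exists_le_of_sum_le h average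
  obtain ⟨huv, hvw, hwu⟩ : G.Adj u v ∧ G.Adj v w ∧ G.Adj w u := by
    simpa [orderedTriangles] using ht
  exact ⟨u, v, w, huv, hvw, hwu, hle⟩

lemma sum_degree_sq_le :
    ∑ v, G.degree v ^ 2 ≤ Fintype.card V * G.maxCut + #(orderedTriangles G) := by
  have cut (v : V) : ∑ x ∈ G.neighborFinset v, G.degree x ≤
      G.maxCut + ∑ x ∈ G.neighborFinset v, codegree G v x := by
    have split := card_interedges_union_right G (G.neighborFinset v)
      (disjoint_compl_right (a := G.neighborFinset v))
    rw [union_compl, card_interedges_univ_right, card_interedges_neighborFinset] at split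
    linarith [card_interedges_compl_le_maxCut G (G.neighborFinset v)]
  calc ∑ v, G.degree v ^ 2 = ∑ v, ∑ x ∈ G.neighborFinset v, G.degree x := by
        rw [sum_neighborFinset_comm]
        simp [sq]
    _ ≤ ∑ v, (G.maxCut + ∑ x ∈ G.neighborFinset v, codegree G v x) := sum_le_sum fun v _ ↦ cut v
    _ = _ := by simp [sum_add_distrib, card_orderedTriangles]

end Codegree

section TriangleColoring

variable {V : Type*} {G : SimpleGraph V}

lemma isIndepSet_commonNeighbors (hG : G.CliqueFree 4) {u v : V} (huv : G.Adj u v) :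
    G.IsIndepSet (G.commonNeighbors u v) := by
  classical
  intro x hx y hy _ hxy
  have triangle : G.IsNClique 3 {v, x, y} :=
    SimpleGraph.is3Clique_triple_iff.2 ⟨hx.2, hy.2, hxy⟩
  refine hG _ (triangle.insert (a := u) ?_)
  simpa using ⟨huv, hx.1, hy.1⟩

lemma not_adj_and_adj_and_adj (hG : G.CliqueFree 4) {u v w : V} (huv : G.Adj u v)
    (hvw : G.Adj v w) (hwu : G.Adj w u) (x : V) : ¬(G.Adj u x ∧ G.Adj v x ∧ G.Adj w x) :=
  fun ⟨hu, hv, hw⟩ ↦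
    isIndepSet_commonNeighbors hG huv ⟨hwu.symm, hvw⟩ ⟨hu, hv⟩ hw.ne hw

/-- The four-coloring attached to a triangle `uvw` of a `K₄`-free graph: `(true, true)`,
`(true, false)` and `(false, true)` mark the common neighbors of `uv`, of `vw` and of `wu`, and
`(false, false)` the vertices with at most one neighbor in the triangle. Only the last class can
contain edges. -/
def triangleColoring (G : SimpleGraph V) [DecidableRel G.Adj] (u v w x : V) : Bool × Bool :=
  (G.Adj v x ∧ (G.Adj u x ∨ G.Adj w x), G.Adj u x ∧ (G.Adj v x ∨ G.Adj w x))

variable [DecidableRel G.Adj]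

lemma isIndepSet_triangleColoring (hG : G.CliqueFree 4) {u v w : V} (huv : G.Adj u v)
    (hvw : G.Adj v w) (hwu : G.Adj w u) {b : Bool × Bool} (hb : b ≠ (false, false)) :
    G.IsIndepSet {x | triangleColoring G u v w x = b} := by
  have indep {a b : V} (hab : G.Adj a b) := isIndepSet_commonNeighbors hG hab
  rcases b with ⟨_ | _, _ | _⟩
  · exact absurd rfl hb
  · refine (indep hwu).mono fun x hx ↦ ?_
    simp only [triangleColoring, Set.mem_ofPred_eq, Prod.mk.injEq, decide_eq_true_eq,
      decide_eq_false_iff_not] at hx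
    exact ⟨by tauto, by tauto⟩
  · refine (indep hvw).mono fun x hx ↦ ?_
    simp only [triangleColoring, Set.mem_ofPred_eq, Prod.mk.injEq, decide_eq_true_eq,
      decide_eq_false_iff_not] at hx
    exact ⟨by tauto, by tauto⟩
  · refine (indep huv).mono fun x hx ↦ ?_
    simp only [triangleColoring, Set.mem_ofPred_eq, Prod.mk.injEq, decide_eq_true_eq] at hx
    exact ⟨by tauto, by tauto⟩

lemma card_triangleColoring [Fintype V] [DecidableEq V] (hG : G.CliqueFree 4) {u v w : V}
    (huv : G.Adj u v) (hvw : G.Adj v w) (hwu : G.Adj w u) :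
    #{x | triangleColoring G u v w x = (false, false)} +
      (codegree G u v + codegree G v w + codegree G w u) = Fintype.card V := by
  have codegree_eq (a b : V) : codegree G a b = ∑ x, if G.Adj a x ∧ G.Adj b x then 1 else 0 := by
    rw [codegree, ← card_filter]
    congr 1
    ext x
    simp
  have one_class (x : V) : (if triangleColoring G u v w x = (false, false) then 1 else 0) +
      ((if G.Adj u x ∧ G.Adj v x then 1 else 0) + (if G.Adj v x ∧ G.Adj w x then 1 else 0) +
        (if G.Adj w x ∧ G.Adj u x then 1 else 0)) = 1 := by
    have := not_adj_and_adj_and_adj hG huv hvw hwu x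
    by_cases hu : G.Adj u x <;> by_cases hv : G.Adj v x <;> by_cases hw : G.Adj w x <;>
      simp_all [triangleColoring]
  simp only [codegree_eq, card_filter, ← sum_add_distrib, one_class, sum_const, card_univ,
    smul_eq_mul, mul_one]

end TriangleColoring

section K4Free

variable {V : Type*} [Fintype V] [DecidableEq V] {G : SimpleGraph V} [DecidableRel G.Adj]

lemma four_mul_sum_codegree_add_le (hG : G.CliqueFree 4) {u v : V} (huv : G.Adj u v) :
    4 * ∑ x ∈ G.neighborFinset v ∩ G.neighborFinset u, codegree G v x + 2 * #G.edgeFinset ≤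
      4 * G.maxCut + ∑ x ∈ G.neighborFinset v, codegree G v x := by
  set N := G.neighborFinset v
  set S := N ∩ G.neighborFinset u
  set T := N \ G.neighborFinset u
  have disj : Disjoint S T := disjoint_left.2 fun x hS hT ↦
    (mem_sdiff.1 hT).2 (mem_inter.1 hS).2
  have union : S ∪ T = N := (union_comm _ _).trans (sdiff_union_inter _ _)
  have indep : G.IsIndepSet S := by
    simpa [S, N, SimpleGraph.commonNeighbors] using isIndepSet_commonNeighbors hG huv.symm
  have inside : #(G.interedges S N) = #(G.interedges S T) := by
    rw [← union, card_interedges_union_right G S disj,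
      interedges_self_eq_empty_of_isIndepSet G indep, card_empty, zero_add]
  have bound := four_mul_card_interedges_add_le_of_disjoint G disj
  rwa [union, ← inside, card_interedges_neighborFinset, card_interedges_neighborFinset] at bound

lemma four_mul_sum_codegree_sq_add_le (hG : G.CliqueFree 4) (v : V) :
    4 * ∑ x ∈ G.neighborFinset v, codegree G v x ^ 2 + 2 * #G.edgeFinset * G.degree v ≤
      (4 * G.maxCut + ∑ x ∈ G.neighborFinset v, codegree G v x) * G.degree v := by
  have double_count : ∑ u ∈ G.neighborFinset v,
      ∑ x ∈ G.neighborFinset v ∩ G.neighborFinset u, codegree G v x =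
        ∑ x ∈ G.neighborFinset v, codegree G v x ^ 2 := by
    rw [sum_comm' (t' := G.neighborFinset v)
      (s' := fun x ↦ G.neighborFinset v ∩ G.neighborFinset x)]
    · simp [sq, codegree]
    · intro x u
      simp only [mem_inter, G.mem_neighborFinset, G.adj_comm x u]
      tauto
  have sum_bound := sum_le_sum fun u (hu : u ∈ G.neighborFinset v) ↦
    four_mul_sum_codegree_add_le hG ((G.mem_neighborFinset v u).1 hu).symm
  simp only [sum_add_distrib, ← mul_sum, double_count, sum_const,
    G.card_neighborFinset_eq_degree, smul_eq_mul] at sum_bound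
  linarith

lemma two_mul_card_edgeFinset_add_three_mul_sum_codegree_le (hG : G.CliqueFree 4) (v : V) :
    2 * #G.edgeFinset + 3 * ∑ x ∈ G.neighborFinset v, codegree G v x ≤
      4 * G.maxCut + G.degree v ^ 2 := by
  rcases (G.degree v).eq_zero_or_pos with hv | hv
  · have isolated : G.neighborFinset v = ∅ := by
      rwa [← card_eq_zero, G.card_neighborFinset_eq_degree]
    simpa [hv, isolated] using
      four_mul_card_interedges_add_le_of_disjoint G (disjoint_empty_left (∅ : Finset V))
  · have am_gm := sum_le_sum fun x (_ : x ∈ G.neighborFinset v) ↦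
      two_mul_le_add_sq (2 * codegree G v x) (G.degree v)
    simp only [mul_pow, sum_add_distrib, ← mul_sum, ← sum_mul, sum_const,
      G.card_neighborFinset_eq_degree, smul_eq_mul] at am_gm
    refine Nat.le_of_mul_le_mul_left ?_ hv
    linarith [four_mul_sum_codegree_sq_add_le hG v]

lemma two_mul_card_edgeFinset_mul_card_add_le (hG : G.CliqueFree 4) :
    2 * #G.edgeFinset * Fintype.card V + 3 * #(orderedTriangles G) ≤
      4 * G.maxCut * Fintype.card V + ∑ v, G.degree v ^ 2 := by
  have sum_bound := sum_le_sum fun v (_ : v ∈ univ) ↦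
    two_mul_card_edgeFinset_add_three_mul_sum_codegree_le hG v
  simp only [sum_add_distrib, ← mul_sum, ← card_orderedTriangles, sum_const, card_univ,
    smul_eq_mul] at sum_bound
  linarith

lemma exists_two_mul_card_edgeFinset_le (hG : G.CliqueFree 4)
    (h : (orderedTriangles G).Nonempty) :
    ∃ r, 2 * #G.edgeFinset ≤ 3 * G.maxCut + r ^ 2 ∧
      3 * #(orderedTriangles G) + 2 * #G.edgeFinset * r ≤
        2 * #G.edgeFinset * Fintype.card V := by
  obtain ⟨u, v, w, huv, hvw, hwu, hle⟩ := exists_three_mul_card_orderedTriangles_le G h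
  refine ⟨#{x | triangleColoring G u v w x = (false, false)}, ?_, ?_⟩
  · exact two_mul_card_edgeFinset_le_of_isIndepSet G (triangleColoring G u v w) (false, false)
      fun b hb ↦ isIndepSet_triangleColoring hG huv hvw hwu hb
  · rw [← card_triangleColoring hG huv hvw hwu]
    linarith

end K4Free

section EdgeDensity

/- For a graph with `n` vertices, `e` edges and `T` ordered triangles, `x`, `β`, `σ` and `τ` stand
for `2e / n²`, `b(G) / n²`, `(∑ d(v)²) / n³` and `T / n³`; `ρ` is the proportion of vertices in the
fourth class of a triangle coloring. -/
variable {x β σ τ ρ : ℝ}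

lemma edgeDensity_mem_Icc (hβ : β ≤ x / 2 - 1 / 9) (hσ : x ^ 2 ≤ σ) (hcut : σ ≤ β + τ)
    (hpartial : x + 3 * τ ≤ 4 * β + σ) : x ∈ Set.Icc (7 / 12) (2 / 3) := by
  have quadratic : (x - 7 / 12) * (x - 2 / 3) ≤ 0 := by linarith
  rcases mul_nonpos_iff.1 quadratic with h | h <;> constructor <;> linarith

lemma edgeDensity_eq_two_thirds (hβ : β ≤ x / 2 - 1 / 9) (hσ : x ^ 2 ≤ σ) (hcut : σ ≤ β + τ)
    (hpartial : x + 3 * τ ≤ 4 * β + σ) (hρ : 0 ≤ ρ) (hcolor : x ≤ 3 * β + ρ ^ 2)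
    (htriangle : 3 * τ + x * ρ ≤ x) : x = 2 / 3 := by
  obtain ⟨hx, hx'⟩ := edgeDensity_mem_Icc hβ hσ hcut hpartial
  have lower : (1 - 3 * x / 2) / 3 ≤ ρ ^ 2 := by linarith
  have upper : ρ ≤ 3 / 2 * (1 - 3 * x / 2) := by
    have factored : x * ρ ≤ (2 * x - 1 / 3) * (1 - 3 * x / 2) := by linarith
    have mono : (2 * x - 1 / 3) * (1 - 3 * x / 2) ≤ 3 / 2 * x * (1 - 3 * x / 2) :=
      mul_le_mul_of_nonneg_right (by linarith) (by linarith)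
    exact le_of_mul_le_mul_left (a := x) (by linarith [factored.trans mono]) (by linarith)
  have squeeze := lower.trans (pow_le_pow_left₀ hρ upper 2)
  refine le_antisymm hx' ?_
  by_contra! hlt
  nlinarith

end EdgeDensity

section Turan

variable {V : Type*} [Fintype V] {G : SimpleGraph V} [DecidableRel G.Adj] {r : ℕ}

lemma two_mul_mul_card_edgeFinset_le_of_cliqueFree (hG : G.CliqueFree (r + 1)) :
    2 * r * #G.edgeFinset ≤ (r - 1) * Fintype.card V ^ 2 := by
  rcases r.eq_zero_or_pos with rfl | hr
  · simp
  obtain ⟨H, _, hH⟩ := SimpleGraph.exists_isTuranMaximal (V := V) hr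
  obtain ⟨φ⟩ := hH.nonempty_iso_turanGraph
  calc 2 * r * #G.edgeFinset ≤ 2 * r * #H.edgeFinset := Nat.mul_le_mul_left _ (hH.2 hG)
    _ = 2 * r * #(SimpleGraph.turanGraph (Fintype.card V) r).edgeFinset := by
        rw [φ.card_edgeFinset_eq]
    _ ≤ (r - 1) * Fintype.card V ^ 2 := SimpleGraph.mul_card_edgeFinset_turanGraph_le

lemma isTuranMaximal_of_two_mul_mul_card_edgeFinset_eq (hr : 0 < r) (hG : G.CliqueFree (r + 1))
    (h : 2 * r * #G.edgeFinset = (r - 1) * Fintype.card V ^ 2) : G.IsTuranMaximal r :=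
  ⟨hG, fun _ _ hH ↦ Nat.le_of_mul_le_mul_left
    ((two_mul_mul_card_edgeFinset_le_of_cliqueFree hH).trans_eq h.symm) (Nat.mul_pos two_pos hr)⟩

lemma exists_balanced_partition_of_isTuranMaximal (hr : 0 < r) (hG : G.IsTuranMaximal r)
    (hdvd : r ∣ Fintype.card V) :
    ∃ f : V → Fin r, (∀ i, #{v | f v = i} = Fintype.card V / r) ∧
      ∀ u v, G.Adj u v ↔ f u ≠ f v := by
  obtain ⟨φ⟩ := hG.nonempty_iso_turanGraph
  refine ⟨fun v ↦ ⟨φ v % r, Nat.mod_lt _ hr⟩, fun i ↦ ?_, fun u v ↦ ?_⟩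
  · calc #{v | (⟨φ v % r, Nat.mod_lt _ hr⟩ : Fin r) = i}
        = ∑ v, if (φ v : ℕ) % r = i then 1 else 0 := by simp only [card_filter, Fin.ext_iff]
      _ = ∑ j : Fin (Fintype.card V), if (j : ℕ) % r = i then 1 else 0 :=
          φ.toEquiv.sum_comp fun j ↦ if (j : ℕ) % r = i then 1 else 0
      _ = #{k ∈ range (Fintype.card V) | k ≡ i [MOD r]} := by
          rw [Fin.sum_univ_eq_sum_range fun k ↦ if k % r = i then 1 else 0, ← card_filter]
          simp only [Nat.ModEq, Nat.mod_eq_of_lt i.is_lt]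
      _ = Fintype.card V / r := by
          rw [← Nat.count_eq_card_filter_range, Nat.count_modEq_card _ hr,
            Nat.mod_eq_zero_of_dvd hdvd, if_neg (Nat.not_lt_zero _), add_zero]
  · rw [← φ.map_adj_iff, SimpleGraph.turanGraph_adj, ne_eq, ne_eq, Fin.ext_iff]

end Turan

section Extremal

variable {V : Type*} [Fintype V] (G : SimpleGraph V) [DecidableRel G.Adj]

lemma two_mul_card_edgeFinset_sq_le :
    (2 * #G.edgeFinset) ^ 2 ≤ Fintype.card V * ∑ v, G.degree v ^ 2 := by
  rw [← G.sum_degrees_eq_twice_card_edges]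
  exact sq_sum_le_card_mul_sum_sq

variable [DecidableEq V]

lemma orderedTriangles_nonempty [Nonempty V]
    (h : (Fintype.card V : ℝ) ^ 2 / 9 ≤ #G.edgeFinset - G.maxCut) :
    (orderedTriangles G).Nonempty := by
  by_contra! hT
  have hn : (0 : ℝ) < Fintype.card V := Nat.cast_pos.2 Fintype.card_pos
  have cauchy : (2 * #G.edgeFinset : ℝ) ^ 2 ≤ Fintype.card V * ∑ v, (G.degree v : ℝ) ^ 2 :=
    mod_cast two_mul_card_edgeFinset_sq_le G
  have cut : ∑ v, (G.degree v : ℝ) ^ 2 ≤ Fintype.card V * G.maxCut := by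
    simpa [hT] using (Nat.cast_le (α := ℝ)).2 (sum_degree_sq_le G)
  have scaled_cut := mul_le_mul_of_nonneg_left cut hn.le
  have scaled_h := mul_le_mul_of_nonneg_left h (sq_nonneg (Fintype.card V : ℝ))
  linarith [sq_nonneg (2 * #G.edgeFinset - (Fintype.card V : ℝ) ^ 2 / 4), pow_pos hn 4]

variable {G}

lemma three_mul_card_edgeFinset_eq (hG : G.CliqueFree 4)
    (h : (Fintype.card V : ℝ) ^ 2 / 9 ≤ #G.edgeFinset - G.maxCut) :
    3 * #G.edgeFinset = Fintype.card V ^ 2 := by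
  rcases isEmpty_or_nonempty V with _ | _
  · have : #G.edgeFinset ≤ 0 := by simpa using G.card_edgeFinset_le_card_choose_two
    simpa using this
  obtain ⟨r, color, triangle⟩ :=
    exists_two_mul_card_edgeFinset_le hG (orderedTriangles_nonempty G h)
  have cauchy := two_mul_card_edgeFinset_sq_le G
  have cut := sum_degree_sq_le G
  have partial_cut := two_mul_card_edgeFinset_mul_card_add_le hG
  rify at cauchy cut partial_cut color triangle ⊢
  have hn : (0 : ℝ) < Fintype.card V := Nat.cast_pos.2 Fintype.card_pos
  set n : ℝ := (Fintype.card V : ℝ)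
  have density : 2 * #G.edgeFinset / n ^ 2 = (2 / 3 : ℝ) := by
    apply edgeDensity_eq_two_thirds (β := G.maxCut / n ^ 2)
      (σ := (∑ v, (G.degree v : ℝ) ^ 2) / n ^ 3) (τ := #(orderedTriangles G) / n ^ 3)
      (ρ := r / n) <;> first | positivity | (field_simp; linarith)
  field_simp at density
  linarith

end Extremal

end MaxCut

/-- If a `K₄`-free graph `G` on `n` vertices satisfies `e(G) - b(G) ≥ n² / 9`,
then `3 ∣ n` and `G` is the complete 3-partite graph with parts of size `n / 3`. -/
theorem K4_free_max_cut_extremal {V : Type*} [Fintype V] [DecidableEq V]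
    (G : SimpleGraph V) [DecidableRel G.Adj] (hG : G.CliqueFree 4)
    (h : ((Fintype.card V : ℝ) ^ 2 / 9) ≤ (G.edgeFinset.card : ℝ) - G.maxCut) :
    3 ∣ Fintype.card V ∧
      ∃ f : V → Fin 3,
        (∀ i : Fin 3, (Finset.univ.filter fun v => f v = i).card = Fintype.card V / 3) ∧
        (∀ u v : V, G.Adj u v ↔ f u ≠ f v) := by
  have edges : 3 * #G.edgeFinset = Fintype.card V ^ 2 := MaxCut.three_mul_card_edgeFinset_eq hG h
  have dvd : 3 ∣ Fintype.card V := Nat.prime_three.dvd_of_dvd_pow (Dvd.intro _ edges)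
  have turan : G.IsTuranMaximal 3 :=
    MaxCut.isTuranMaximal_of_two_mul_mul_card_edgeFinset_eq three_pos hG (by lia)
  exact ⟨dvd, MaxCut.exists_balanced_partition_of_isTuranMaximal three_pos turan dvd⟩
end

section
/- Let H be a fixed graph with chromatic number χ(H) = 4. For every ε > 0 there exists N such that every graph G on n ≥ N vertices that contains no copy of H as a subgraph can be made bipartite by deleting at most (1/9 + ε)n^2 edges; that is, e(G) - b(G) ≤ (1/9 + ε)n^2. -/
open Finset

/-!
Every edge `uv` of `G` determines two cuts through the adjacencies of the other vertices to `u` and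
`v`; in a balanced complete tripartite graph, the extremal example, both are optimal. One of them is
fractional, but since the expected size of a random cut is affine in each probability, a fractional
cut never beats the maximum cut. Summing over all edges what these cuts leave uncut and adding
suitable squares gives an expression in four vertices which, once symmetrised, is bounded pointwise
by a multiple of the indicator of `K₄`. Hence a graph with `e` edges and maximum cut `b` has at
least `3 e (e - b - n² / 9)` labelled copies of `K₄`. If `e - b` exceeds `(1 / 9 + ε) n²`, this is a
positive proportion of all quadruples, and Erdős's theorem on `r`-partite hypergraphs yields a
blow-up of `K₄` which contains `H`.
-/

namespace MaxCut

section Rounding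

variable {ι : Type*} [DecidableEq ι] {a b M : ℝ} {f : (ι → ℝ) → ℝ}

lemma le_of_separately_convexOn [Finite ι]
    (hf : ∀ y i, ConvexOn ℝ (Set.Icc a b) fun t => f (Function.update y i t))
    (hM : ∀ s, (∀ i, s i = a ∨ s i = b) → f s ≤ M) {y : ι → ℝ} (hy : ∀ i, y i ∈ Set.Icc a b) :
    f y ≤ M := by
  have := Fintype.ofFinite ι
  suffices ∀ T : Finset ι, ∀ y : ι → ℝ, (∀ i, y i ∈ Set.Icc a b) →
      (∀ i ∉ T, y i = a ∨ y i = b) → f y ≤ M from this univ y hy (by simp)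
  intro T
  induction T using Finset.induction_on with
  | empty => exact fun y _ hyT => hM y fun i => hyT i (notMem_empty i)
  | insert i T _ ih =>
    intro y hy hyT
    have hab : a ≤ b := (hy i).1.trans (hy i).2
    have hround : ∀ t, t = a ∨ t = b → f (Function.update y i t) ≤ M := by
      refine fun t ht => ih _ (fun j => ?_) fun j hj => ?_ <;> obtain rfl | hji := eq_or_ne j i
      · rcases ht with rfl | rfl <;> simp [hab]
      · simpa [hji] using hy j
      · simpa using ht
      · simpa [hji] using hyT j (by simp [hji, hj])
    have hmax := (hf y i).le_max_of_mem_Icc (Set.left_mem_Icc.2 hab) (Set.right_mem_Icc.2 hab)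
      (hy i)
    rw [Function.update_eq_self] at hmax
    exact hmax.trans (max_le (hround a (.inl rfl)) (hround b (.inr rfl)))

end Rounding

section ExpectedCut

variable {V : Type*} [Fintype V] (G : SimpleGraph V) [DecidableRel G.Adj]

/-- The expected size of the random cut that puts each vertex `w` independently on the positive side
with probability `(1 + y w) / 2`. The sum runs over ordered pairs, hence the `4`. -/
noncomputable def expectedCut (y : V → ℝ) : ℝ :=
  ∑ w, ∑ z, G.adjMatrix ℝ w z * ((1 - y w * y z) / 4)

lemma sum_adjMatrix_s2 : ∑ w, ∑ z, G.adjMatrix ℝ w z = 2 * #G.edgeFinset := by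
  have hdeg := G.sum_degrees_eq_twice_card_edges
  simp only [SimpleGraph.adjMatrix_apply, sum_boole, ← SimpleGraph.neighborFinset_eq_filter,
    SimpleGraph.card_neighborFinset_eq_degree]
  exact_mod_cast hdeg

lemma sum_adjMatrix_mul_uncut (y : V → ℝ) :
    ∑ w, ∑ z, G.adjMatrix ℝ w z * ((1 + y w * y z) / 2) =
      2 * (#G.edgeFinset - expectedCut G y) := by
  rw [mul_sub, ← sum_adjMatrix_s2, expectedCut]
  simp only [mul_sum, ← sum_sub_distrib]
  exact sum_congr rfl fun w _ => sum_congr rfl fun z _ => by ring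

variable [DecidableEq V]

lemma expectedCut_update (y : V → ℝ) (v : V) (t : ℝ) :
    expectedCut G (Function.update y v t) =
      (1 - t) * expectedCut G (Function.update y v 0) +
        t * expectedCut G (Function.update y v 1) := by
  simp only [expectedCut, mul_sum, ← sum_add_distrib]
  refine sum_congr rfl fun w _ => sum_congr rfl fun z _ => ?_
  have hdiag : G.adjMatrix ℝ v v = 0 := by simp
  by_cases hw : w = v <;> by_cases hz : z = v <;>
    simp only [hw, hz, hdiag, Function.update_self, Function.update_of_ne, ne_eq,
      not_false_eq_true] <;> ring

lemma convexOn_expectedCut_update (s : Set ℝ) (hs : Convex ℝ s) (y : V → ℝ) (v : V) :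
    ConvexOn ℝ s fun t => expectedCut G (Function.update y v t) := by
  refine ⟨hs, fun t _ u _ p q _ _ hpq => le_of_eq ?_⟩
  simp only [smul_eq_mul]
  rw [expectedCut_update G y v (p * t + q * u), expectedCut_update G y v t,
    expectedCut_update G y v u]
  linear_combination -expectedCut G (Function.update y v 0) * hpq

lemma cast_cutSize (S : Finset V) :
    (G.cutSize S : ℝ) = ∑ w, ∑ z, if w ∈ S ∧ z ∉ S then G.adjMatrix ℝ w z else 0 := by
  have hS : S ×ˢ Sᶜ = ({p | p.1 ∈ S ∧ p.2 ∉ S} : Finset (V × V)) := by ext; simp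
  simp only [SimpleGraph.cutSize, hS, filter_filter, ← Fintype.sum_prod_type', card_filter,
    SimpleGraph.adjMatrix_apply, ite_and, Nat.cast_sum, Nat.cast_ite, Nat.cast_one, Nat.cast_zero]

lemma expectedCut_of_sign {s : V → ℝ} (hs : ∀ v, s v = -1 ∨ s v = 1) :
    expectedCut G s = G.cutSize {v | s v = 1} := by
  set S : Finset V := {v | s v = 1} with hS
  have hswap : (G.cutSize S : ℝ) = ∑ w, ∑ z, if z ∈ S ∧ w ∉ S then G.adjMatrix ℝ w z else 0 := by
    rw [cast_cutSize, sum_comm]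
    simp only [SimpleGraph.adjMatrix_apply, G.adj_comm]
  have hdouble : 2 * expectedCut G s = G.cutSize S + G.cutSize S := by
    nth_rewrite 1 [cast_cutSize]
    rw [hswap, expectedCut]
    simp only [mul_sum, ← sum_add_distrib]
    refine sum_congr rfl fun w _ => sum_congr rfl fun z _ => ?_
    rcases hs w with hw | hw <;> rcases hs z with hz | hz <;> norm_num [hS, hw, hz]
  linarith

lemma expectedCut_le_maxCut {y : V → ℝ} (hy : ∀ v, y v ∈ Set.Icc (-1) 1) :
    expectedCut G y ≤ G.maxCut := by
  refine le_of_separately_convexOn (convexOn_expectedCut_update G _ (convex_Icc _ _))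
    (fun s hs => ?_) hy
  rw [expectedCut_of_sign G hs]
  exact_mod_cast le_sup (f := G.cutSize) (mem_univ _)

lemma two_mul_sub_maxCut_le {y : V → ℝ} (hy : ∀ v, y v ∈ Set.Icc (-1) 1) :
    2 * ((#G.edgeFinset : ℝ) - G.maxCut) ≤
      ∑ w, ∑ z, G.adjMatrix ℝ w z * ((1 + y w * y z) / 2) := by
  rw [sum_adjMatrix_mul_uncut]
  linarith [expectedCut_le_maxCut G hy]

end ExpectedCut

lemma labelledCopyCount_top {V ι : Type*} [Fintype V] [Fintype ι] [DecidableEq ι]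
    (G : SimpleGraph V) [DecidablePred fun x : ι → V => Pairwise fun i j => G.Adj (x i) (x j)] :
    G.labelledCopyCount (⊤ : SimpleGraph ι) =
      #{x : ι → V | Pairwise fun i j => G.Adj (x i) (x j)} := by
  have e : SimpleGraph.Copy (⊤ : SimpleGraph ι) G ≃
      {x : ι → V // Pairwise fun i j => G.Adj (x i) (x j)} :=
    { toFun φ := ⟨φ, fun _ _ hij => φ.toHom.map_adj hij⟩
      invFun x := ⟨⟨x, fun hij => x.2 hij⟩, fun i j hij => by_contra fun hne => (x.2 hne).ne hij⟩
      left_inv _ := rfl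
      right_inv _ := rfl }
  classical
  rw [SimpleGraph.labelledCopyCount, ← Fintype.card_subtype]
  convert Fintype.card_congr e

section Symmetrisation

lemma card_mul_sum_eq_sum_sum_comp_perm {ι κ V : Type*} [Fintype ι] [DecidableEq ι] [Fintype κ]
    [Fintype V] (τ : κ → Equiv.Perm ι) (f : (ι → V) → ℝ) :
    Fintype.card κ * ∑ x, f x = ∑ x, ∑ k, f (x ∘ τ k) := by
  have hperm (k : κ) : ∑ x, f (x ∘ τ k) = ∑ x, f x :=
    Equiv.sum_comp ((τ k).symm.arrowCongr (Equiv.refl V)) f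
  simp [sum_comm (s := univ (α := ι → V)), hperm]

lemma sum_fin_four_arrow {V : Type*} [Fintype V] (f : V → V → V → V → ℝ) :
    ∑ x : Fin 4 → V, f (x 0) (x 1) (x 2) (x 3) = ∑ u, ∑ v, ∑ w, ∑ z, f u v w z := by
  have hcons {n : ℕ} (g : (Fin (n + 1) → V) → ℝ) : ∑ x, g x = ∑ v, ∑ x, g (Fin.cons v x) := by
    rw [← Fintype.sum_prod_type', ← Equiv.sum_comp (Fin.consEquiv fun _ => V)]
    rfl
  simp only [hcons, Fintype.sum_unique]
  rfl

/-- A permutation of four positions that selects an ordered pair to stand first. The twelve values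
of `p` select every ordered pair once; which of the two remaining positions comes third is
arbitrary, since `certificate` is symmetric in its last two arguments. -/
def pairFirst (p : Fin 4 × Fin 3) : Equiv.Perm (Fin 4) :=
  Equiv.swap 0 p.1 * Equiv.swap 1 p.2.succ

lemma sum_pairFirst {V : Type*} (f : V → V → V → V → ℝ) (x : Fin 4 → V) :
    ∑ p, f (x (pairFirst p 0)) (x (pairFirst p 1)) (x (pairFirst p 2)) (x (pairFirst p 3)) =
      f (x 0) (x 1) (x 2) (x 3) + f (x 0) (x 2) (x 1) (x 3) + f (x 0) (x 3) (x 2) (x 1) +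
      (f (x 1) (x 0) (x 2) (x 3) + f (x 1) (x 2) (x 0) (x 3) + f (x 1) (x 3) (x 2) (x 0)) +
      (f (x 2) (x 1) (x 0) (x 3) + f (x 2) (x 0) (x 1) (x 3) + f (x 2) (x 3) (x 0) (x 1)) +
      (f (x 3) (x 1) (x 2) (x 0) + f (x 3) (x 2) (x 1) (x 0) + f (x 3) (x 0) (x 2) (x 1)) := by
  simp only [Fintype.sum_prod_type, Fin.sum_univ_four, Fin.sum_univ_three]
  rfl

end Symmetrisation

section Certificate

variable {V : Type*} (G : SimpleGraph V) [DecidableRel G.Adj]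

/-- A fractional cut in the sense of `expectedCut`, attached to an edge `uv`: the neighbours of `u`
against the remaining neighbours of `v`, with the vertices adjacent to neither leaning to the side
of the latter. In a complete tripartite graph it separates the part of `u` from the other two. -/
noncomputable def nbrCut (u v w : V) : ℝ :=
  if G.Adj u w then -1 else if G.Adj v w then 1 else 3 / 4

/-- The cut, attached to an edge `uv`, that separates the vertices adjacent to exactly one of `u`
and `v` from the others. In a complete tripartite graph it cuts off the part containing neither. -/
def symmDiffCut (u v w : V) : ℝ := if G.Adj u w ↔ G.Adj v w then -1 else 1

/-- A weight on vertices whose sum is squared in `certificate`. The weights `-10` and `5` make this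
sum vanish when `uv` is an edge of a balanced complete tripartite graph. -/
def imbalance (u v w : V) : ℝ :=
  if G.Adj u w ∧ G.Adj v w then -10 else if G.Adj u w ∨ G.Adj v w then 5 else 2

/-- The difference of the adjacency indicators of `u` and `v`, whose sum over all vertices is the
difference of their degrees. -/
noncomputable def nbrDiff (u v w : V) : ℝ := G.adjMatrix ℝ u w - G.adjMatrix ℝ v w

/-- The flag-algebra certificate. Summed over `w` and `z`, each of the two cuts contributes what it
leaves uncut in excess of `2 / 9` of all ordered pairs, and every other term is the square of a sum.
The coefficients are chosen so that after symmetrisation only copies of `K₄` contribute positively,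
which is `sum_pairFirst_certificate_le`. -/
noncomputable def certificate (u v w z : V) : ℝ :=
  if G.Adj u v then
    30 * (G.adjMatrix ℝ w z * ((1 + nbrCut G u v w * nbrCut G u v z) / 2) - 2 / 9)
    + 6 * (G.adjMatrix ℝ w z * ((1 + symmDiffCut G u v w * symmDiffCut G u v z) / 2) - 2 / 9)
    + 1 / 5 * (imbalance G u v w * imbalance G u v z) + 3 * (nbrDiff G u v w * nbrDiff G u v z)
  else 12 * (nbrDiff G u v w * nbrDiff G u v z)

lemma nbrCut_mem_Icc (u v w : V) : nbrCut G u v w ∈ Set.Icc (-1) 1 := by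
  unfold nbrCut
  split_ifs <;> norm_num

lemma symmDiffCut_mem_Icc (u v w : V) : symmDiffCut G u v w ∈ Set.Icc (-1) 1 := by
  unfold symmDiffCut
  split_ifs <;> norm_num

lemma pairwise_fin_four_iff {r : Fin 4 → Fin 4 → Prop} (hr : ∀ i j, r i j ↔ r j i) :
    Pairwise r ↔ r 0 1 ∧ r 0 2 ∧ r 0 3 ∧ r 1 2 ∧ r 1 3 ∧ r 2 3 := by
  simp [Pairwise, Fin.forall_fin_succ, hr 1 0, hr 2 0, hr 2 1, hr 3 0, hr 3 1, hr 3 2]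
  tauto

lemma sum_pairFirst_certificate_le (x : Fin 4 → V)
    [Decidable (Pairwise fun i j => G.Adj (x i) (x j))] :
    ∑ p, certificate G (x (pairFirst p 0)) (x (pairFirst p 1)) (x (pairFirst p 2))
        (x (pairFirst p 3)) ≤
      if Pairwise fun i j => G.Adj (x i) (x j) then 576 else 0 := by
  rw [sum_pairFirst (certificate G) x]
  simp only [pairwise_fin_four_iff fun i j => G.adj_comm (x i) (x j), certificate, nbrCut,
    symmDiffCut, imbalance, nbrDiff, SimpleGraph.adjMatrix_apply, G.adj_comm (x 1) (x 0),
    G.adj_comm (x 2) (x 0), G.adj_comm (x 2) (x 1), G.adj_comm (x 3) (x 0),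
    G.adj_comm (x 3) (x 1), G.adj_comm (x 3) (x 2)]
  by_cases h01 : G.Adj (x 0) (x 1) <;> by_cases h02 : G.Adj (x 0) (x 2) <;>
  by_cases h03 : G.Adj (x 0) (x 3) <;> by_cases h12 : G.Adj (x 1) (x 2) <;>
  by_cases h13 : G.Adj (x 1) (x 3) <;> by_cases h23 : G.Adj (x 2) (x 3) <;>
  simp only [h01, h02, h03, h12, h13, h23, if_true, if_false, and_true, and_false, or_true,
    or_false, iff_true, iff_false, not_true] <;>
  norm_num
variable [Fintype V]

lemma sum_mul_self_nonneg (g : V → ℝ) : 0 ≤ ∑ w, g w * ∑ z, g z := by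
  rw [← sum_mul]
  exact mul_self_nonneg _

lemma sum_certificate_le :
    ∑ u, ∑ v, ∑ w, ∑ z, certificate G u v w z ≤
      48 * G.labelledCopyCount (⊤ : SimpleGraph (Fin 4)) := by
  classical
  have hsym := card_mul_sum_eq_sum_sum_comp_perm pairFirst
    fun x : Fin 4 → V => certificate G (x 0) (x 1) (x 2) (x 3)
  have hle : ∑ x : Fin 4 → V, ∑ p, certificate G (x (pairFirst p 0)) (x (pairFirst p 1))
        (x (pairFirst p 2)) (x (pairFirst p 3)) ≤
      576 * G.labelledCopyCount (⊤ : SimpleGraph (Fin 4)) :=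
    calc
      _ ≤ ∑ x : Fin 4 → V, if Pairwise fun i j => G.Adj (x i) (x j) then (576 : ℝ) else 0 :=
        sum_le_sum fun x _ => sum_pairFirst_certificate_le G x
      _ = _ := by rw [labelledCopyCount_top, ← sum_filter, sum_const, nsmul_eq_mul, mul_comm]
  rw [← sum_fin_four_arrow]
  simp only [Fintype.card_prod, Fintype.card_fin, Function.comp_apply] at hsym
  push_cast at hsym
  linarith

lemma sum_certificate_nonneg_of_not_adj {u v : V} (huv : ¬ G.Adj u v) :
    0 ≤ ∑ w, ∑ z, certificate G u v w z := by
  simp only [certificate, huv, if_false, ← mul_sum]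
  exact mul_nonneg (by norm_num) (sum_mul_self_nonneg _)

lemma mul_sub_maxCut_le_sum_certificate [DecidableEq V] {u v : V} (huv : G.Adj u v) :
    72 * ((#G.edgeFinset : ℝ) - G.maxCut - (Fintype.card V : ℝ) ^ 2 / 9) ≤
      ∑ w, ∑ z, certificate G u v w z := by
  have hnbr := two_mul_sub_maxCut_le G (nbrCut_mem_Icc G u v)
  have hsymm := two_mul_sub_maxCut_le G (symmDiffCut_mem_Icc G u v)
  have himb := sum_mul_self_nonneg (imbalance G u v)
  have hdiff := sum_mul_self_nonneg (nbrDiff G u v)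
  simp only [certificate, huv, if_true, sum_add_distrib, sum_sub_distrib, ← mul_sum, sum_const,
    card_univ, nsmul_eq_mul]
  linarith

theorem three_mul_card_edgeFinset_mul_le_labelledCopyCount [DecidableEq V] :
    3 * #G.edgeFinset * ((#G.edgeFinset : ℝ) - G.maxCut - (Fintype.card V : ℝ) ^ 2 / 9) ≤
      G.labelledCopyCount (⊤ : SimpleGraph (Fin 4)) := by
  set δ : ℝ := (#G.edgeFinset : ℝ) - G.maxCut - (Fintype.card V : ℝ) ^ 2 / 9
  have hpair (u v : V) : G.adjMatrix ℝ u v * (72 * δ) ≤ ∑ w, ∑ z, certificate G u v w z := by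
    by_cases huv : G.Adj u v
    · simpa [huv] using mul_sub_maxCut_le_sum_certificate G huv
    · simpa [huv] using sum_certificate_nonneg_of_not_adj G huv
  have hsum : 2 * #G.edgeFinset * (72 * δ) ≤ ∑ u, ∑ v, ∑ w, ∑ z, certificate G u v w z := by
    simp only [← sum_adjMatrix_s2, sum_mul]
    exact sum_le_sum fun u _ => sum_le_sum fun v _ => hpair u v
  linarith [sum_certificate_le G]

end Certificate

section Supersaturation

lemma card_mul_pow_le_sum_descFactorial {ι : Type*} (s : Finset ι) (p : ι → ℕ) {k : ℕ} {a : ℝ}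
    (hka : (k : ℝ) - 1 ≤ a) (ha : #s * a ≤ ∑ i ∈ s, (p i : ℝ)) :
    #s * (a - k + 1) ^ k ≤ ∑ i ∈ s, ((p i).descFactorial k : ℝ) := by
  rcases s.eq_empty_or_nonempty with rfl | hs
  · simp
  obtain rfl | hk := eq_or_ne k 0
  · simp
  have hs0 : (0 : ℝ) < #s := by exact_mod_cast hs.card_pos
  have hmean : a ≤ ∑ i ∈ s, (#s : ℝ)⁻¹ * p i := by
    rw [← mul_sum, ← div_eq_inv_mul, le_div_iff₀ hs0]
    linarith
  have hjensen := descPochhammer_eval_le_sum_descFactorial hk p (fun _ => (#s : ℝ)⁻¹)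
    (fun _ _ => by positivity) (by simp [hs0.ne']) (hka.trans hmean)
  rw [← mul_sum _ (fun i => ((p i).descFactorial k : ℝ)), ← div_eq_inv_mul, le_div_iff₀ hs0,
    mul_comm] at hjensen
  calc #s * (a - k + 1) ^ k ≤ #s * (∑ i ∈ s, (#s : ℝ)⁻¹ * p i - k + 1) ^ k := by
        gcongr
        linarith
    _ ≤ #s * (descPochhammer ℝ k).eval (∑ i ∈ s, (#s : ℝ)⁻¹ * p i) := by
        gcongr
        exact pow_le_descPochhammer_eval (hka.trans hmean)
    _ ≤ ∑ i ∈ s, ((p i).descFactorial k : ℝ) := hjensen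

variable {W X Y : Type*} [Fintype W] [Fintype X] [Fintype Y]

lemma sum_embedding_card_forall_rel (R : X → Y → Prop) [∀ x, DecidablePred (R x)] :
    ∑ g : W ↪ X, #{y | ∀ i, R (g i) y} =
      ∑ y, (#{x | R x y}).descFactorial (Fintype.card W) := by
  classical
  have hfiber (y : Y) : #{g : W ↪ X | ∀ i, R (g i) y} =
      (#{x | R x y}).descFactorial (Fintype.card W) := by
    let e : {g : W ↪ X // ∀ i, R (g i) y} ≃ (W ↪ {x // R x y}) :=
      Equiv.codRestrict W {x | R x y}
    rw [← Fintype.card_subtype, Fintype.card_congr e, Fintype.card_embedding_eq,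
      Fintype.card_subtype]
  simp only [← hfiber]
  exact sum_card_bipartiteAbove_eq_sum_card_bipartiteBelow fun (g : W ↪ X) y => ∀ i, R (g i) y

lemma exists_embedding_le_card_forall_rel [Nonempty Y] (R : X → Y → Prop)
    [∀ x, DecidablePred (R x)] {c : ℝ} (hc : 0 < c)
    (hX : 2 * Fintype.card W ≤ c * Fintype.card X)
    (hR : c * (Fintype.card X * Fintype.card Y) ≤ #{p : X × Y | R p.1 p.2}) :
    ∃ g : W ↪ X, (c / 2) ^ Fintype.card W * Fintype.card Y ≤ #{y | ∀ i, R (g i) y} := by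
  set t := Fintype.card W
  set n := Fintype.card X
  have hdeg : #(univ : Finset Y) * (c * n) ≤ ∑ y, (#{x | R x y} : ℝ) := by
    refine le_trans (by rw [card_univ]; linarith) (hR.trans_eq ?_)
    simp only [card_filter, Fintype.sum_prod_type_right, Nat.cast_sum]
  have hcount : Fintype.card Y * (c * n - t + 1) ^ t ≤
      ∑ g : W ↪ X, (#{y | ∀ i, R (g i) y} : ℝ) := by
    have hdouble := congrArg (Nat.cast (R := ℝ)) (sum_embedding_card_forall_rel (W := W) R)
    push_cast at hdouble
    rw [hdouble, ← card_univ]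
    exact card_mul_pow_le_sum_descFactorial _ _ (by linarith) hdeg
  have hpos : 0 < Fintype.card Y * (c * n - t + 1) ^ t := by
    have : 0 < c * n - t + 1 := by linarith
    have := Fintype.card_pos (α := Y)
    positivity
  have hne : (univ : Finset (W ↪ X)).Nonempty :=
    nonempty_of_sum_ne_zero (hpos.trans_le hcount).ne'
  obtain ⟨g, -, hg⟩ := exists_le_of_sum_le hne (f := fun _ => (c / 2) ^ t * Fintype.card Y) <|
    calc
      _ = (n.descFactorial t : ℝ) * ((c / 2) ^ t * Fintype.card Y) := by
        rw [sum_const, card_univ, Fintype.card_embedding_eq, nsmul_eq_mul]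
      _ ≤ (n : ℝ) ^ t * ((c / 2) ^ t * Fintype.card Y) := by
        gcongr
        exact_mod_cast Nat.descFactorial_le_pow _ _
      _ = Fintype.card Y * (c / 2 * n) ^ t := by ring
      _ ≤ Fintype.card Y * (c * n - t + 1) ^ t := by
        gcongr
        linarith
      _ ≤ _ := hcount
  exact ⟨g, hg⟩

theorem eventually_exists_blowup_of_le_card (W : Type*) [Finite W] (k : ℕ) {c : ℝ} (hc : 0 < c) :
    ∀ᶠ n : ℕ in Filter.atTop, ∀ {V : Type*} [Fintype V], Fintype.card V = n →
      ∀ E : Finset (Fin k → V), c * n ^ k ≤ #E →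
        ∃ g : Fin k → W ↪ V, ∀ i : Fin k → W, (fun j => g j (i j)) ∈ E := by
  classical
  have := Fintype.ofFinite W
  induction k generalizing c with
  | zero =>
    refine .of_forall fun n V _ _ E hE => ⟨finZeroElim, fun i => ?_⟩
    have hE0 : (0 : ℝ) < #E := hc.trans_le (by simpa using hE)
    obtain ⟨x, hx⟩ := card_pos.1 (Nat.cast_pos.1 hE0)
    convert hx
  | succ k ih =>
    have hlarge : ∀ᶠ n : ℕ in Filter.atTop, 2 * Fintype.card W / c ≤ n :=
      tendsto_natCast_atTop_atTop.eventually_ge_atTop _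
    filter_upwards [ih (c := (c / 2) ^ Fintype.card W) (by positivity), hlarge,
      Filter.eventually_gt_atTop 0] with n hn hnW hn0 V _ hV E hE
    have : Nonempty V := Fintype.card_pos_iff.1 (hV ▸ hn0)
    have hEcard : #{p : V × (Fin k → V) | Fin.cons p.1 p.2 ∈ E} = #E :=
      card_equiv (Fin.consEquiv fun _ => V) fun _ => by simp [Fin.consEquiv]
    obtain ⟨g₀, hg₀⟩ := exists_embedding_le_card_forall_rel (W := W) (X := V)
      (Y := Fin k → V) (fun v x => Fin.cons v x ∈ E) hc
      (by rw [hV, mul_comm c]; exact (div_le_iff₀ hc).1 hnW)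
      (by rw [hEcard, Fintype.card_fun, Fintype.card_fin, hV, Nat.cast_pow, ← pow_succ']; exact hE)
    obtain ⟨g, hg⟩ := hn hV _ (by simpa [hV] using hg₀)
    refine ⟨Fin.cons g₀ g, fun i => ?_⟩
    have := (mem_filter.1 (hg (Fin.tail i))).2 (i 0)
    convert this using 1
    ext j
    cases j using Fin.cases <;> rfl

end Supersaturation

section Blowup

variable {W : Type*} {H : SimpleGraph W}

lemma isContained_of_blowup {V : Type*} {G : SimpleGraph V} {r : ℕ} (hH : H.Colorable r)
    (g : Fin r → W ↪ V)
    (hg : ∀ i : Fin r → W, Pairwise fun j k => G.Adj (g j (i j)) (g k (i k))) :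
    H.IsContained G := by
  obtain ⟨C⟩ := hH
  have hadj {a b : W} (hab : C a ≠ C b) : G.Adj (g (C a) a) (g (C b) b) := by
    simpa [hab] using hg (Function.update (fun _ => a) (C b) b) hab
  refine ⟨⟨⟨fun a => g (C a) a, fun hab => hadj (C.valid hab)⟩, fun a b hab => ?_⟩⟩
  obtain hC | hC := eq_or_ne (C a) (C b)
  · exact (g (C b)).injective (by simpa [hC] using hab)
  · exact absurd hab (hadj hC).ne

theorem eventually_isContained_of_le_labelledCopyCount_top [Finite W] {r : ℕ}
    (hH : H.Colorable r) {c : ℝ} (hc : 0 < c) :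
    ∀ᶠ n : ℕ in Filter.atTop, ∀ {V : Type*} [Fintype V], Fintype.card V = n →
      ∀ G : SimpleGraph V, c * n ^ r ≤ G.labelledCopyCount (⊤ : SimpleGraph (Fin r)) →
        H.IsContained G := by
  classical
  filter_upwards [eventually_exists_blowup_of_le_card W r hc] with n hn V _ hV G hG
  rw [labelledCopyCount_top] at hG
  obtain ⟨g, hg⟩ := hn hV _ hG
  exact isContained_of_blowup hH g fun i => (mem_filter.1 (hg i)).2

end Blowup

end MaxCut

theorem four_chromatic_free_max_cut_general {W : Type*} [Finite W] {H : SimpleGraph W}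
    (hH : H.Colorable 4) {ε : ℝ} (hε : 0 < ε) :
    ∀ᶠ n : ℕ in Filter.atTop, ∀ {V : Type*} [Fintype V] [DecidableEq V], Fintype.card V = n →
      ∀ (G : SimpleGraph V) [DecidableRel G.Adj], H.Free G →
        (#G.edgeFinset : ℝ) - G.maxCut ≤ (1 / 9 + ε) * (n : ℝ) ^ 2 := by
  filter_upwards [MaxCut.eventually_isContained_of_le_labelledCopyCount_top hH (c := ε / 3)
    (by positivity)] with n hn V _ _ hV G _ hfree
  by_contra! hfar
  have hedges : (n : ℝ) ^ 2 / 9 ≤ #G.edgeFinset := by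
    nlinarith [G.maxCut.cast_nonneg (α := ℝ)]
  have hcopies : ε / 3 * (n : ℝ) ^ 4 ≤ G.labelledCopyCount (⊤ : SimpleGraph (Fin 4)) :=
    calc
      _ = 3 * ((n : ℝ) ^ 2 / 9) * (ε * (n : ℝ) ^ 2) := by ring
      _ ≤ 3 * #G.edgeFinset * ((#G.edgeFinset : ℝ) - G.maxCut - (n : ℝ) ^ 2 / 9) := by
        gcongr
        linarith
      _ ≤ _ := by
        rw [← hV]
        exact MaxCut.three_mul_card_edgeFinset_mul_le_labelledCopyCount G
  exact hfree (hn hV G hcopies)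

/-- If `H` is a fixed graph with chromatic number 4, then for every `ε > 0` there is `N`
such that every `H`-free graph `G` on `n ≥ N` vertices satisfies
`e(G) - b(G) ≤ (1/9 + ε) n²`. -/
theorem four_chromatic_free_max_cut {W : Type*} [Fintype W] (H : SimpleGraph W)
    (hH : H.chromaticNumber = 4) {ε : ℝ} (hε : 0 < ε) :
    ∃ N : ℕ, ∀ n : ℕ, N ≤ n → ∀ (G : SimpleGraph (Fin n)) [DecidableRel G.Adj],
      (¬ ∃ f : W → Fin n, Function.Injective f ∧ ∀ a b : W, H.Adj a b → G.Adj (f a) (f b)) →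
      (G.edgeFinset.card : ℝ) - G.maxCut ≤ (1 / 9 + ε) * (n : ℝ) ^ 2 := by
  obtain ⟨N, hN⟩ := Filter.eventually_atTop.1 <| four_chromatic_free_max_cut_general
    (SimpleGraph.chromaticNumber_le_iff_colorable.1 hH.le) hε
  exact ⟨N, fun n hn G _ hfree => hN n hn (Fintype.card_fin n) G fun ⟨φ⟩ =>
    hfree ⟨φ, φ.injective, fun _ _ hab => φ.toHom.map_adj hab⟩⟩
end
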